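/- arXiv:1905.08470 — 2 statements merged into one kernel-verified Lean document; each statement's English description precedes it below -/
import Mathlib

section
/- Let p_1,...,p_s be odd primes and t_1,...,t_s positive integers, and set m = p_1^{2t_1}···p_s^{2t_s}. Let H be a group of order 4 (either Z_4 or Z_2 × Z_2) and let G_i be an elementary abelian group of order p_i^{4t_i} for each i. Then the group G = H × G_1 × ··· × G_s contains a Menon–Hadamard difference set, i.e., a subset D of G with |D| = 2m² − m such that every non-identity element g of G has exactly m² − m representations g = x − y with x, y ∈ D, x ≠ y. -/
noncomputable section

/-- `D` is a Menon–Hadamard difference set with parameter `m` in the additively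
written group `G`: `|D| = 2m² − m` and every non-identity `g` has exactly
`m² − m` representations `g = x − y` with `x, y ∈ D`, `x ≠ y`. -/
def IsMHDS {G : Type} [AddCommGroup G] (m : ℕ) (D : Set G) : Prop :=
  D.ncard = 2 * m ^ 2 - m ∧
    ∀ g : G, g ≠ 0 →
      {z : G × G | z.1 ∈ D ∧ z.2 ∈ D ∧ z.1 ≠ z.2 ∧ z.1 - z.2 = g}.ncard = m ^ 2 - m

/-!
A difference set is encoded by the `±1`-valued function equal to `-1` exactly on the set; the
Menon–Hadamard condition says that its autocorrelation vanishes away from `0` and that its sum is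
`2 * m`. A function on `H × W`, with `H` of order four, is a quadruple of functions on `W`, and if
distinct members have constant cross-correlations with the signs of a Hadamard matrix, then the
contributions of different members cancel, whichever group of order four `H` is. Such quadruples
are closed under Turyn's composition, which reduces the theorem to a single elementary abelian
group of order `p ^ (4 * t)`.

This group is the plane `K × K` over the field `K` with `q ^ 2` elements, `q = p ^ t`. A function
which on the line through each point `t` of the projective line has the form `a t + b t * χ`, with
`χ` the quadratic character of `K`, has cross-correlations governed by the Paley conference matrix
`M`. A quadruple arises from `{0, ±1}`-valued vectors `b₀`, `b₁` with complementary supports such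
that `M b₀ = q b₁` and `M b₁ = q b₀`, that is, from `±1`-valued eigenvectors `b₀ + b₁` and
`b₀ - b₁` of `M` with eigenvalues `q` and `-q`. The subfield with `q` elements supplies them:
since `χ` is trivial on it, the sums of `χ` over its cosets are known, and a `±1`-valued function
that is constant on these cosets and takes the value `1` on one coset more than the value `-1`
extends to an eigenvector for `q`; dilating by a nonsquare gives the one for `-q`.
-/

namespace MenonHadamard

section CrossCorrelation

variable {V W : Type*} [AddCommGroup V] [Fintype V] [AddCommGroup W] [Fintype W]

/-- The periodic cross-correlation of two integer-valued functions on a finite abelian group. -/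
def crossCorr (f g : W → ℤ) (a : W) : ℤ :=
  ∑ x, f (x + a) * g x

theorem crossCorr_sum_sum {ι κ : Type*} (s : Finset ι) (t : Finset κ) (f : ι → W → ℤ)
    (g : κ → W → ℤ) (a : W) :
    crossCorr (∑ i ∈ s, f i) (∑ j ∈ t, g j) a = ∑ i ∈ s, ∑ j ∈ t, crossCorr (f i) (g j) a := by
  simp only [crossCorr, Finset.sum_apply, Finset.sum_mul_sum]
  rw [Finset.sum_comm]
  exact Finset.sum_congr rfl fun i _ => Finset.sum_comm

theorem crossCorr_smul_smul (c d : ℤ) (f g : W → ℤ) (a : W) :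
    crossCorr (c • f) (d • g) a = c * d * crossCorr f g a := by
  simp only [crossCorr, Finset.mul_sum, Pi.smul_apply, smul_eq_mul]
  exact Finset.sum_congr rfl fun x _ => by ring

theorem crossCorr_comp_addEquiv (e : V ≃+ W) (f g : W → ℤ) (a : V) :
    crossCorr (f ∘ e) (g ∘ e) a = crossCorr f g (e a) := by
  simp only [crossCorr, Function.comp_apply, map_add]
  exact e.toEquiv.sum_comp fun x => f (x + e a) * g x

/-- The tensor product of two functions, on the product of their domains. -/
def tensor (f : V → ℤ) (g : W → ℤ) (z : V × W) : ℤ :=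
  f z.1 * g z.2

theorem crossCorr_tensor (f f' : V → ℤ) (g g' : W → ℤ) (a : V) (b : W) :
    crossCorr (tensor f g) (tensor f' g') (a, b) = crossCorr f f' a * crossCorr g g' b := by
  simp only [crossCorr, tensor, Fintype.sum_prod_type, Finset.sum_mul_sum, Prod.fst_add,
    Prod.snd_add]
  exact Finset.sum_congr rfl fun x _ => Finset.sum_congr rfl fun y _ => by ring

end CrossCorrelation

section SignFunction

variable {X : Type} [AddCommGroup X]

theorem ncard_setOf_sub_eq (D : Set X) {g : X} (hg : g ≠ 0) :
    {z : X × X | z.1 ∈ D ∧ z.2 ∈ D ∧ z.1 ≠ z.2 ∧ z.1 - z.2 = g}.ncard =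
      {x | x + g ∈ D ∧ x ∈ D}.ncard := by
  rw [← Set.ncard_image_of_injective {x | x + g ∈ D ∧ x ∈ D} (f := fun x => (x + g, x))
    fun x y h => (Prod.mk.inj h).2]
  congr 1
  ext ⟨x, y⟩
  simp only [Set.mem_ofPred_eq, Set.mem_image, Prod.mk.injEq]
  constructor
  · rintro ⟨hx, hy, -, rfl⟩
    exact ⟨y, ⟨by simpa using hx, hy⟩, by simp⟩
  · rintro ⟨y, ⟨hx, hy⟩, rfl, rfl⟩
    exact ⟨hx, hy, by simpa using hg, by simp⟩

theorem two_mul_ncard_eq_neg_one {X : Type*} [Fintype X] {F : X → ℤ} (hF : ∀ x, F x ^ 2 = 1) :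
    2 * ({x | F x = -1}.ncard : ℤ) = Fintype.card X - ∑ x, F x := by
  have indicator (x : X) : 2 * (if F x = -1 then 1 else 0) = 1 - F x := by
    rcases sq_eq_one_iff.1 (hF x) with h | h <;> simp [h]
  rw [Set.ncard_eq_toFinset_card', Set.toFinset_ofPred, Finset.card_filter, Nat.cast_sum,
    Finset.mul_sum]
  push_cast
  simp [indicator]

variable [Fintype X] {F : X → ℤ}

theorem four_mul_ncard_eq_neg_one (hF : ∀ x, F x ^ 2 = 1) (g : X) :
    4 * ({x | F (x + g) = -1 ∧ F x = -1}.ncard : ℤ) =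
      Fintype.card X - 2 * ∑ x, F x + crossCorr F F g := by
  have indicator (x : X) : 4 * (if F (x + g) = -1 ∧ F x = -1 then 1 else 0) =
      1 - F (x + g) - F x + F (x + g) * F x := by
    rcases sq_eq_one_iff.1 (hF x) with h | h <;>
      rcases sq_eq_one_iff.1 (hF (x + g)) with h' | h' <;> simp [h, h']
  have translate : ∑ x, F (x + g) = ∑ x, F x := Equiv.sum_comp (Equiv.addRight g) F
  rw [Set.ncard_eq_toFinset_card', Set.toFinset_ofPred, Finset.card_filter, Nat.cast_sum,
    Finset.mul_sum]
  push_cast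
  simp only [indicator, Finset.sum_add_distrib, Finset.sum_sub_distrib, translate, crossCorr]
  simp
  ring

theorem isMHDS_of_crossCorr_eq_zero {m : ℕ} (hF : ∀ x, F x ^ 2 = 1)
    (hcard : Fintype.card X = 4 * m ^ 2) (hsum : ∑ x, F x = 2 * m)
    (hcorr : ∀ g ≠ 0, crossCorr F F g = 0) :
    IsMHDS m {x | F x = -1} := by
  have m_le : m ≤ m ^ 2 := Nat.le_self_pow two_ne_zero m
  refine ⟨?_, fun g hg => ?_⟩
  · have h := two_mul_ncard_eq_neg_one hF
    rw [hcard, hsum] at h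
    zify [show m ≤ 2 * m ^ 2 by lia]
    push_cast at h
    linarith
  · rw [ncard_setOf_sub_eq _ hg]
    have h := four_mul_ncard_eq_neg_one hF g
    rw [hcard, hsum, hcorr g hg] at h
    simp only [Set.mem_ofPred_eq]
    zify [m_le]
    push_cast at h
    linarith

end SignFunction

section Quadruple

/-- The entries of the Sylvester–Hadamard matrix of order 2: `-1` at `(1, 1)` and `1` elsewhere. -/
def hadamardSign (p : Fin 2 × Fin 2) : ℤ :=
  if p = (1, 1) then -1 else 1

theorem hadamardSign_sq (p : Fin 2 × Fin 2) : hadamardSign p ^ 2 = 1 := by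
  unfold hadamardSign
  split_ifs <;> norm_num

theorem hadamardSign_comm (i j : Fin 2) : hadamardSign (i, j) = hadamardSign (j, i) := by
  revert i j; decide

theorem sum_hadamardSign_mul (i j : Fin 2) :
    ∑ k, hadamardSign (i, k) * hadamardSign (j, k) = if i = j then 2 else 0 := by
  revert i j; decide

/-- Four `±1`-valued functions on `W` from which Menon–Hadamard difference sets are assembled:
their supplementary autocorrelation is a delta function, and distinct ones have constant
cross-correlation. The indices are arranged in a square so that the signs form a Hadamard matrix. -/
structure IsMenonQuadruple {W : Type*} [AddCommGroup W] [Fintype W] (m : ℕ)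
    (f : Fin 2 × Fin 2 → W → ℤ) : Prop where
  sq_eq_one : ∀ p w, f p w ^ 2 = 1
  card : Fintype.card W = m ^ 2
  sum : ∀ p, ∑ w, f p w = hadamardSign p * m
  cross : ∀ p q, p ≠ q → ∀ a, crossCorr (f p) (f q) a = hadamardSign p * hadamardSign q
  auto : ∀ a ≠ 0, ∑ p, crossCorr (f p) (f p) a = 0

variable {V W : Type*} [AddCommGroup V] [Fintype V] [AddCommGroup W] [Fintype W]

theorem isMenonQuadruple_const [Unique W] :
    IsMenonQuadruple 1 fun p (_ : W) => hadamardSign p where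
  sq_eq_one p _ := hadamardSign_sq p
  card := by simp
  sum := by simp
  cross := by simp [crossCorr]
  auto a ha := absurd (Subsingleton.elim a 0) ha

theorem IsMenonQuadruple.comp_addEquiv {m : ℕ} {f : Fin 2 × Fin 2 → W → ℤ}
    (hf : IsMenonQuadruple m f) (e : V ≃+ W) : IsMenonQuadruple m fun p => f p ∘ e where
  sq_eq_one p _ := hf.sq_eq_one p _
  card := (Fintype.card_congr e.toEquiv).trans hf.card
  sum p := (e.toEquiv.sum_comp (f p)).trans (hf.sum p)
  cross p q hpq a := (crossCorr_comp_addEquiv e _ _ a).trans (hf.cross p q hpq _)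
  auto a ha := by
    simp only [crossCorr_comp_addEquiv]
    exact hf.auto _ (by simpa using ha)

theorem crossCorr_hadamardSign_comp {H : Type*} [AddCommGroup H] [Fintype H]
    (e : H ≃ Fin 2 × Fin 2) {a : H} (ha : a ≠ 0) :
    crossCorr (hadamardSign ∘ e) (hadamardSign ∘ e) a = 0 := by
  classical
  have sign (h : H) : hadamardSign (e h) = 1 - 2 * if h = e.symm (1, 1) then 1 else 0 := by
    simp only [hadamardSign, Equiv.eq_symm_apply]
    split_ifs <;> norm_num
  have product (h : H) : hadamardSign (e (h + a)) * hadamardSign (e h) =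
      1 - 2 * (if h = e.symm (1, 1) then 1 else 0) -
        2 * if h = e.symm (1, 1) - a then 1 else 0 := by
    simp only [sign, eq_sub_iff_add_eq]
    by_cases hh : h = e.symm (1, 1)
    · have : h + a ≠ e.symm (1, 1) := by simpa [hh] using ha
      simp only [if_pos hh, if_neg this]
      norm_num
    · simp only [if_neg hh]
      ring
  have card_eq : Fintype.card H = 4 := by simp [Fintype.card_congr e]
  simp [crossCorr, product, Finset.sum_sub_distrib, card_eq]

theorem IsMenonQuadruple.exists_isMHDS {W : Type} [AddCommGroup W] [Fintype W] {m : ℕ}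
    {f : Fin 2 × Fin 2 → W → ℤ} (hf : IsMenonQuadruple m f) (H : Type) [AddCommGroup H]
    [Fintype H] (hH : Fintype.card H = 4) :
    ∃ D : Set (H × W), IsMHDS m D := by
  obtain ⟨e⟩ : Nonempty (H ≃ Fin 2 × Fin 2) := ⟨Fintype.equivOfCardEq (by simpa using hH)⟩
  let F : H × W → ℤ := fun z => f (e z.1) z.2
  have corr_eq (a : H) (g : W) :
      crossCorr F F (a, g) = ∑ h, crossCorr (f (e (h + a))) (f (e h)) g := by
    simp only [F, crossCorr, Fintype.sum_prod_type, Prod.fst_add, Prod.snd_add]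
  refine ⟨_, isMHDS_of_crossCorr_eq_zero (F := F) (fun z => hf.sq_eq_one _ _) ?_ ?_ ?_⟩
  · rw [Fintype.card_prod, hH, hf.card]
  · rw [Fintype.sum_prod_type, e.sum_comp fun p => ∑ w, f p w]
    simp only [hf.sum, ← Finset.sum_mul]
    rfl
  · rintro ⟨a, g⟩ hag
    rw [corr_eq]
    by_cases ha : a = 0
    · subst ha
      simp only [add_zero]
      rw [e.sum_comp fun p => crossCorr (f p) (f p) g]
      exact hf.auto g fun hg => hag (by rw [hg]; rfl)
    · have ne (h : H) : e (h + a) ≠ e h := by simpa using ha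
      simp only [hf.cross _ _ (ne _)]
      exact crossCorr_hadamardSign_comp e ha

/-- Turyn's composition of quadruples: `(f (i, 0) + f (i, 1)) / 2` times `g (j, 0)` plus
`(f (i, 0) - f (i, 1)) / 2` times `g (j, 1)`, written with a case distinction to stay within `ℤ`. -/
def turyn (f : Fin 2 × Fin 2 → V → ℤ) (g : Fin 2 × Fin 2 → W → ℤ) (p : Fin 2 × Fin 2)
    (z : V × W) : ℤ :=
  f (p.1, 0) z.1 * g (p.2, if f (p.1, 0) z.1 = f (p.1, 1) z.1 then 0 else 1) z.2

section Composition

variable {m n : ℕ} {f : Fin 2 × Fin 2 → V → ℤ} {g : Fin 2 × Fin 2 → W → ℤ}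

theorem two_smul_turyn {V W : Type*} {f : Fin 2 × Fin 2 → V → ℤ} {g : Fin 2 × Fin 2 → W → ℤ}
    (hf : ∀ p v, f p v ^ 2 = 1) (i j : Fin 2) :
    (2 : ℤ) • turyn f g (i, j) =
      ∑ r : Fin 2 × Fin 2, hadamardSign r • tensor (f (i, r.1)) (g (j, r.2)) := by
  ext ⟨v, w⟩
  rcases sq_eq_one_iff.1 (hf (i, 0) v) with h₀ | h₀ <;>
    rcases sq_eq_one_iff.1 (hf (i, 1) v) with h₁ | h₁ <;>
    simp [turyn, tensor, hadamardSign, Fintype.sum_prod_type, h₀, h₁] <;> ring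

theorem four_mul_crossCorr_turyn (hf : ∀ p v, f p v ^ 2 = 1) (i j i' j' : Fin 2) (a : V) (b : W) :
    4 * crossCorr (turyn f g (i, j)) (turyn f g (i', j')) (a, b) =
      ∑ k : Fin 2 × Fin 2, ∑ l : Fin 2 × Fin 2,
        hadamardSign (k.1, l.1) * hadamardSign (k.2, l.2) *
          (crossCorr (f (i, k.1)) (f (i', k.2)) a * crossCorr (g (j, l.1)) (g (j', l.2)) b) := by
  calc 4 * crossCorr (turyn f g (i, j)) (turyn f g (i', j')) (a, b)
    _ = crossCorr ((2 : ℤ) • turyn f g (i, j)) ((2 : ℤ) • turyn f g (i', j')) (a, b) := by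
        rw [crossCorr_smul_smul]; norm_num
    _ = _ := by
        simp only [two_smul_turyn hf, crossCorr_sum_sum, crossCorr_smul_smul, crossCorr_tensor,
          Fintype.sum_prod_type]

theorem sum_turyn (hf : IsMenonQuadruple m f) (hg : IsMenonQuadruple n g) (i j : Fin 2) :
    ∑ z, turyn f g (i, j) z = hadamardSign (i, j) * (m * n : ℕ) := by
  have signs : ∑ r : Fin 2 × Fin 2,
      hadamardSign r * (hadamardSign (i, r.1) * hadamardSign (j, r.2)) =
        2 * hadamardSign (i, j) := by
    revert i j; decide
  have sum_tensor (r : Fin 2 × Fin 2) : ∑ z, tensor (f (i, r.1)) (g (j, r.2)) z =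
      hadamardSign (i, r.1) * hadamardSign (j, r.2) * (m * n : ℕ) := by
    simp only [tensor, Fintype.sum_prod_type, ← Finset.sum_mul_sum, hf.sum, hg.sum]
    push_cast
    ring
  have pointwise (z : V × W) := congrFun (two_smul_turyn hf.sq_eq_one (g := g) i j) z
  simp only [Pi.smul_apply, Finset.sum_apply, smul_eq_mul] at pointwise
  refine mul_left_cancel₀ (two_ne_zero (α := ℤ)) ?_
  calc 2 * ∑ z, turyn f g (i, j) z
    _ = ∑ r : Fin 2 × Fin 2, hadamardSign r * ∑ z, tensor (f (i, r.1)) (g (j, r.2)) z := by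
        simp only [Finset.mul_sum, pointwise]
        exact Finset.sum_comm
    _ = 2 * (hadamardSign (i, j) * (m * n : ℕ)) := by
        simp only [sum_tensor, ← mul_assoc, ← Finset.sum_mul]
        simp only [mul_assoc, signs]

theorem crossCorr_turyn_of_snd_ne (hf : ∀ p v, f p v ^ 2 = 1) (hg : IsMenonQuadruple n g)
    {j j' : Fin 2} (hj : j ≠ j') (i i' : Fin 2) (a : V) (b : W) :
    crossCorr (turyn f g (i, j)) (turyn f g (i', j')) (a, b) =
      crossCorr (f (i, j)) (f (i', j')) a := by
  have corr_g (l : Fin 2 × Fin 2) : crossCorr (g (j, l.1)) (g (j', l.2)) b =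
      hadamardSign (j, l.1) * hadamardSign (j', l.2) := hg.cross _ _ (by simp [hj]) b
  refine mul_left_cancel₀ (four_ne_zero (α := ℤ)) ?_
  rw [four_mul_crossCorr_turyn hf]
  calc ∑ k : Fin 2 × Fin 2, ∑ l : Fin 2 × Fin 2,
        hadamardSign (k.1, l.1) * hadamardSign (k.2, l.2) *
          (crossCorr (f (i, k.1)) (f (i', k.2)) a * crossCorr (g (j, l.1)) (g (j', l.2)) b)
    _ = ∑ k : Fin 2 × Fin 2, (∑ l, hadamardSign (k.1, l) * hadamardSign (j, l)) *
          (∑ l, hadamardSign (k.2, l) * hadamardSign (j', l)) *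
            crossCorr (f (i, k.1)) (f (i', k.2)) a := by
        refine Finset.sum_congr rfl fun k _ => ?_
        rw [Fintype.sum_mul_sum, ← Fintype.sum_prod_type', Finset.sum_mul]
        exact Finset.sum_congr rfl fun l _ => by rw [corr_g]; ring
    _ = 4 * crossCorr (f (i, j)) (f (i', j')) a := by
        simp only [sum_hadamardSign_mul, Fintype.sum_prod_type, mul_ite, ite_mul, zero_mul,
          mul_zero, Finset.sum_ite_eq', Finset.mem_univ, if_true]
        norm_num

theorem crossCorr_turyn_of_fst_ne (hf : IsMenonQuadruple m f) {i i' : Fin 2} (hi : i ≠ i')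
    (j j' : Fin 2) (a : V) (b : W) :
    crossCorr (turyn f g (i, j)) (turyn f g (i', j')) (a, b) =
      crossCorr (g (j, i)) (g (j', i')) b := by
  have corr_f (k : Fin 2 × Fin 2) : crossCorr (f (i, k.1)) (f (i', k.2)) a =
      hadamardSign (i, k.1) * hadamardSign (i', k.2) := hf.cross _ _ (by simp [hi]) a
  refine mul_left_cancel₀ (four_ne_zero (α := ℤ)) ?_
  rw [four_mul_crossCorr_turyn hf.sq_eq_one, Finset.sum_comm]
  calc ∑ l : Fin 2 × Fin 2, ∑ k : Fin 2 × Fin 2,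
        hadamardSign (k.1, l.1) * hadamardSign (k.2, l.2) *
          (crossCorr (f (i, k.1)) (f (i', k.2)) a * crossCorr (g (j, l.1)) (g (j', l.2)) b)
    _ = ∑ l : Fin 2 × Fin 2, (∑ k, hadamardSign (l.1, k) * hadamardSign (i, k)) *
          (∑ k, hadamardSign (l.2, k) * hadamardSign (i', k)) *
            crossCorr (g (j, l.1)) (g (j', l.2)) b := by
        refine Finset.sum_congr rfl fun l _ => ?_
        rw [Fintype.sum_mul_sum, ← Fintype.sum_prod_type', Finset.sum_mul]
        refine Finset.sum_congr rfl fun k _ => ?_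
        rw [corr_f, hadamardSign_comm k.1, hadamardSign_comm k.2]
        ring
    _ = 4 * crossCorr (g (j, i)) (g (j', i')) b := by
        simp only [sum_hadamardSign_mul, Fintype.sum_prod_type, mul_ite, ite_mul, zero_mul,
          mul_zero, Finset.sum_ite_eq', Finset.mem_univ, if_true]
        norm_num

theorem IsMenonQuadruple.sum_crossCorr_fst (hf : IsMenonQuadruple m f) {k l : Fin 2} (hkl : k ≠ l)
    (a : V) : ∑ i, crossCorr (f (i, k)) (f (i, l)) a = 0 := by
  have corr_f (i : Fin 2) : crossCorr (f (i, k)) (f (i, l)) a =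
      hadamardSign (k, i) * hadamardSign (l, i) := by
    rw [hf.cross _ _ (by simp [hkl]), hadamardSign_comm, hadamardSign_comm i]
  simp only [corr_f, sum_hadamardSign_mul, if_neg hkl]

theorem IsMenonQuadruple.sum_sum_crossCorr_fst (hf : IsMenonQuadruple m f) (a : V) :
    ∑ k : Fin 2 × Fin 2, ∑ i, crossCorr (f (i, k.1)) (f (i, k.2)) a =
      ∑ p, crossCorr (f p) (f p) a := by
  rw [Fintype.sum_prod_type, Fintype.sum_prod_type_right]
  refine Finset.sum_congr rfl fun k _ => ?_
  exact Fintype.sum_eq_single k fun l hl => hf.sum_crossCorr_fst hl.symm a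

theorem four_mul_sum_crossCorr_turyn (hf : IsMenonQuadruple m f) (hg : IsMenonQuadruple n g)
    (a : V) (b : W) :
    4 * ∑ p, crossCorr (turyn f g p) (turyn f g p) (a, b) =
      (∑ p, crossCorr (f p) (f p) a) * ∑ p, crossCorr (g p) (g p) b := by
  calc 4 * ∑ p, crossCorr (turyn f g p) (turyn f g p) (a, b)
    _ = ∑ k : Fin 2 × Fin 2, ∑ l : Fin 2 × Fin 2,
          hadamardSign (k.1, l.1) * hadamardSign (k.2, l.2) *
            ((∑ i, crossCorr (f (i, k.1)) (f (i, k.2)) a) *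
              ∑ j, crossCorr (g (j, l.1)) (g (j, l.2)) b) := by
        simp only [Finset.mul_sum _ _ (4 : ℤ), four_mul_crossCorr_turyn hf.sq_eq_one]
        rw [Finset.sum_comm]
        refine Finset.sum_congr rfl fun k _ => ?_
        rw [Finset.sum_comm]
        refine Finset.sum_congr rfl fun l _ => ?_
        rw [Fintype.sum_mul_sum, Finset.mul_sum, Fintype.sum_prod_type]
        simp only [Finset.mul_sum]
    _ = ∑ k : Fin 2 × Fin 2, ∑ l : Fin 2 × Fin 2,
          (∑ i, crossCorr (f (i, k.1)) (f (i, k.2)) a) *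
            ∑ j, crossCorr (g (j, l.1)) (g (j, l.2)) b := by
        refine Finset.sum_congr rfl fun k _ => Finset.sum_congr rfl fun l _ => ?_
        by_cases hk : k.1 = k.2
        · by_cases hl : l.1 = l.2
          · rw [hk, hl, ← sq, hadamardSign_sq, one_mul]
          · rw [hg.sum_crossCorr_fst hl, mul_zero, mul_zero]
        · rw [hf.sum_crossCorr_fst hk, zero_mul, mul_zero]
    _ = (∑ p, crossCorr (f p) (f p) a) * ∑ p, crossCorr (g p) (g p) b := by
        rw [← Fintype.sum_mul_sum, hf.sum_sum_crossCorr_fst, hg.sum_sum_crossCorr_fst]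

theorem IsMenonQuadruple.turyn (hf : IsMenonQuadruple m f) (hg : IsMenonQuadruple n g) :
    IsMenonQuadruple (m * n) (turyn f g) where
  sq_eq_one p z := by rw [MenonHadamard.turyn, mul_pow, hf.sq_eq_one, hg.sq_eq_one, one_mul]
  card := by rw [Fintype.card_prod, hf.card, hg.card, mul_pow]
  sum p := sum_turyn hf hg p.1 p.2
  cross := by
    rintro ⟨i, j⟩ ⟨i', j'⟩ hne ⟨a, b⟩
    by_cases hj : j = j'
    · have hi : i ≠ i' := fun hi => hne (by rw [hi, hj])
      rw [crossCorr_turyn_of_fst_ne hf hi, hg.cross _ _ (by simp [hi]), hadamardSign_comm,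
        hadamardSign_comm j']
    · rw [crossCorr_turyn_of_snd_ne hf.sq_eq_one hg hj, hf.cross _ _ hne]
  auto := by
    rintro ⟨a, b⟩ hab
    refine mul_left_cancel₀ (four_ne_zero (α := ℤ)) ?_
    rw [four_mul_sum_crossCorr_turyn hf hg, mul_zero]
    by_cases ha : a = 0
    · rw [hg.auto b fun hb => hab (by rw [ha, hb]; rfl), mul_zero]
    · rw [hf.auto a ha, zero_mul]

end Composition

theorem exists_isMenonQuadruple_pi {s : ℕ} {G : Fin s → Type*} [∀ i, AddCommGroup (G i)]
    [∀ i, Fintype (G i)] {m : Fin s → ℕ}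
    (h : ∀ i, ∃ f : Fin 2 × Fin 2 → G i → ℤ, IsMenonQuadruple (m i) f) :
    ∃ f : Fin 2 × Fin 2 → (∀ i, G i) → ℤ, IsMenonQuadruple (∏ i, m i) f := by
  induction s with
  | zero => exact ⟨_, by simpa using isMenonQuadruple_const⟩
  | succ s ih =>
    obtain ⟨f, hf⟩ := h 0
    obtain ⟨g, hg⟩ := ih fun i => h i.succ
    let e : (∀ i, G i) ≃+ G 0 × ∀ i : Fin s, G i.succ :=
      { (Fin.consEquiv G).symm with map_add' := fun _ _ => rfl }
    exact ⟨_, by simpa only [Fin.prod_univ_succ] using (hf.turyn hg).comp_addEquiv e⟩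

end Quadruple

section Plane

variable {K : Type*} [Field K]

/-- The determinant of the `2 × 2` matrix with rows `x` and `y`. -/
def det (x y : K × K) : K :=
  x.1 * y.2 - x.2 * y.1

theorem det_smul_left (z : K) (x y : K × K) : det (z • x) y = z * det x y := by
  simp only [det, Prod.smul_fst, Prod.smul_snd, smul_eq_mul]; ring

theorem det_add_left (x x' y : K × K) : det (x + x') y = det x y + det x' y := by
  simp only [det, Prod.fst_add, Prod.snd_add]; ring

theorem neg_det (x y : K × K) : -det x y = det y x := by
  simp only [det]; ring

theorem det_self (x : K × K) : det x x = 0 := by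
  simp only [det]; ring

theorem smul_eq_smul_add_iff {u v : K × K} (h : det u v ≠ 0) (g : K × K) (z w : K) :
    z • u = w • v + g ↔ z = det g v / det u v ∧ w = det g u / det u v := by
  rw [eq_div_iff h, eq_div_iff h]
  constructor
  · intro e
    constructor
    · rw [← det_smul_left, e, det_add_left, det_smul_left, det_self, mul_zero, zero_add]
    · have := congrArg (det · u) e
      simp only [det_add_left, det_smul_left, det_self, mul_zero] at this
      rw [← neg_det v u]
      linear_combination this
  · rintro ⟨hz, hw⟩
    refine Prod.ext (mul_right_cancel₀ h ?_) (mul_right_cancel₀ h ?_) <;>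
      simp only [det, Prod.smul_fst, Prod.smul_snd, Prod.fst_add, Prod.snd_add, smul_eq_mul] at *
    · linear_combination u.1 * hz - v.1 * hw
    · linear_combination u.2 * hz - v.2 * hw

/-- Representatives of the points of the projective line, `none` being the point at infinity. -/
def rep : Option K → K × K
  | none => (0, 1)
  | some t => (1, t)

theorem rep_ne_zero (t : Option K) : rep t ≠ 0 := by
  cases t <;> simp [rep, Prod.ext_iff]

theorem det_rep_eq_zero_iff {s t : Option K} : det (rep s) (rep t) = 0 ↔ s = t := by
  cases s <;> cases t <;> simp [det, rep, sub_eq_zero, eq_comm]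

theorem exists_eq_smul_rep {g : K × K} (hg : g ≠ 0) : ∃ z : K, z ≠ 0 ∧ ∃ t, g = z • rep t := by
  obtain ⟨x, y⟩ := g
  by_cases hx : x = 0
  · refine ⟨y, fun hy => hg (by simp [hx, hy]), none, by simp [rep, hx]⟩
  · exact ⟨x, hx, some (y / x), by simp [rep, mul_div_cancel₀ _ hx]⟩

theorem smul_rep_eq_smul_rep_iff {z w : K} (hz : z ≠ 0) {s t : Option K} :
    z • rep s = w • rep t ↔ s = t ∧ z = w := by
  constructor
  · intro e
    have st : s = t := by
      have := congrArg (det · (rep t)) e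
      simp only [det_smul_left, det_self, mul_zero] at this
      exact det_rep_eq_zero_iff.1 ((mul_eq_zero.1 this).resolve_left hz)
    subst st
    exact ⟨rfl, smul_left_injective K (rep_ne_zero s) e⟩
  · rintro ⟨rfl, rfl⟩
    rfl

variable [Fintype K] [DecidableEq K]

/-- The function supported on the line spanned by `u` with value `φ z` at `z • u`. -/
def lineFun (φ : K → ℤ) (u x : K × K) : ℤ :=
  ∑ z, if x = z • u then φ z else 0

theorem lineFun_zero {u : K × K} (hu : u ≠ 0) (φ : K → ℤ) : lineFun φ u 0 = φ 0 := by
  simp [lineFun, eq_comm (a := (0 : K × K)), hu]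

theorem lineFun_smul_rep {z : K} (hz : z ≠ 0) (φ : K → ℤ) (s t : Option K) :
    lineFun φ (rep t) (z • rep s) = if s = t then φ z else 0 := by
  simp only [lineFun, smul_rep_eq_smul_rep_iff hz]
  by_cases h : s = t <;> simp [h]

theorem sum_lineFun (φ : K → ℤ) (u : K × K) : ∑ x, lineFun φ u x = ∑ z, φ z := by
  simp only [lineFun]
  rw [Finset.sum_comm]
  simp

theorem crossCorr_lineFun (φ ψ : K → ℤ) (u v g : K × K) :
    crossCorr (lineFun φ u) (lineFun ψ v) g =
      ∑ z, ∑ w, if z • u = w • v + g then φ z * ψ w else 0 := by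
  simp only [crossCorr, lineFun, Finset.sum_mul_sum]
  rw [Finset.sum_comm]
  refine Finset.sum_congr rfl fun z _ => ?_
  rw [Finset.sum_comm]
  refine Finset.sum_congr rfl fun w _ => ?_
  simp [ite_mul, mul_ite, eq_comm]

theorem crossCorr_lineFun_of_det_ne_zero {u v : K × K} (h : det u v ≠ 0) (φ ψ : K → ℤ)
    (g : K × K) :
    crossCorr (lineFun φ u) (lineFun ψ v) g =
      φ (det g v / det u v) * ψ (det g u / det u v) := by
  simp only [crossCorr_lineFun, smul_eq_smul_add_iff h, ite_and]
  simp

theorem crossCorr_lineFun_smul {u : K × K} (hu : u ≠ 0) (φ ψ : K → ℤ) (y : K) :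
    crossCorr (lineFun φ u) (lineFun ψ u) (y • u) = crossCorr φ ψ y := by
  rw [crossCorr_lineFun, Finset.sum_comm]
  simp only [← add_smul, (smul_left_injective K hu).eq_iff]
  simp [crossCorr]

theorem crossCorr_lineFun_eq_zero {u g : K × K} (h : det g u ≠ 0) (φ ψ : K → ℤ) :
    crossCorr (lineFun φ u) (lineFun ψ u) g = 0 := by
  have ne (z w : K) : z • u ≠ w • u + g := fun e => h <| by
    have := congrArg (det · u) e
    simpa only [det_add_left, det_smul_left, det_self, mul_zero, zero_add] using this.symm
  simp [crossCorr_lineFun, ne]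

end Plane

section Spread

variable {K : Type*} [Field K] [Fintype K] [DecidableEq K]

theorem quadraticChar_div (x y : K) :
    quadraticChar K (x / y) = quadraticChar K x * quadraticChar K y := by
  rw [div_eq_mul_inv, map_mul, ← MulChar.inv_apply', (quadraticChar_isQuadratic K).inv]

theorem crossCorr_quadraticChar (hK : ringChar K ≠ 2) (y : K) :
    crossCorr (quadraticChar K) (quadraticChar K) y =
      (if y = 0 then (Fintype.card K : ℤ) else 0) - 1 := by
  by_cases hy : y = 0
  · have sq (x : K) : quadraticChar K x * quadraticChar K x = 1 - if x = 0 then 1 else 0 := by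
      by_cases hx : x = 0
      · simp [hx]
      · rw [← pow_two, quadraticChar_sq_one hx, if_neg hx, sub_zero]
    simp [crossCorr, hy, sq, -quadraticChar_apply, Finset.sum_sub_distrib]
  · have jacobi := jacobiSum_nontrivial_inv (quadraticChar_ne_one hK)
    rw [(quadraticChar_isQuadratic K).inv, jacobiSum] at jacobi
    have neg_one_sq := quadraticChar_sq_one (neg_ne_zero.2 (one_ne_zero (α := K)))
    rw [if_neg hy, crossCorr, ← Equiv.sum_comp (Equiv.mulLeft₀ (-y) (neg_ne_zero.2 hy))]
    calc ∑ x, quadraticChar K (-y * x + y) * quadraticChar K (-y * x)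
      _ = quadraticChar K (-1) * ∑ x, quadraticChar K x * quadraticChar K (1 - x) := by
          rw [Finset.mul_sum]
          refine Finset.sum_congr rfl fun x _ => ?_
          rw [show -y * x + y = y * (1 - x) by ring, show -y * x = -1 * (y * x) by ring]
          simp only [map_mul]
          linear_combination quadraticChar K (-1) * quadraticChar K (1 - x) * quadraticChar K x *
            quadraticChar_sq_one hy
      _ = 0 - 1 := by
          rw [jacobi]
          linear_combination -neg_one_sq

theorem sum_const_add_mul_quadraticChar (hK : ringChar K ≠ 2) (a b : ℤ) :
    ∑ z, (a + b * quadraticChar K z) = Fintype.card K * a := by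
  rw [Finset.sum_add_distrib, ← Finset.mul_sum, quadraticChar_sum_zero hK]
  simp

theorem crossCorr_const_add_mul_quadraticChar (hK : ringChar K ≠ 2) (a b a' b' : ℤ) (y : K) :
    crossCorr (fun z => a + b * quadraticChar K z) (fun z => a' + b' * quadraticChar K z) y =
      Fintype.card K * (a * a') + b * b' * ((if y = 0 then (Fintype.card K : ℤ) else 0) - 1) := by
  have translate : ∑ z, quadraticChar K (z + y) = 0 := by
    rw [← quadraticChar_sum_zero hK]
    exact Equiv.sum_comp (Equiv.addRight y) (quadraticChar K)
  have expand (z : K) :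
      (a + b * quadraticChar K (z + y)) * (a' + b' * quadraticChar K z) =
        a * a' + a * b' * quadraticChar K z + a' * b * quadraticChar K (z + y) +
          b * b' * (quadraticChar K (z + y) * quadraticChar K z) := by ring
  rw [← crossCorr_quadraticChar hK]
  simp [crossCorr, expand, Finset.sum_add_distrib, ← Finset.mul_sum, quadraticChar_sum_zero hK,
    translate, -quadraticChar_apply]

/-- The Paley conference matrix, indexed by the projective line over `K`. -/
def paley : Matrix (Option K) (Option K) ℤ :=
  Matrix.of fun s t => quadraticChar K (det (rep s) (rep t))

theorem paley_self (t : Option K) : paley t t = 0 := by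
  simp [paley, det_self]

theorem paley_sq {s t : Option K} (h : s ≠ t) : paley s t ^ 2 = 1 :=
  quadraticChar_sq_one fun h' => h (det_rep_eq_zero_iff.1 h')

theorem paley_comm (hχ : quadraticChar K (-1) = 1) (s t : Option K) :
    (paley s t : ℤ) = paley t s := by
  simp only [paley, Matrix.of_apply]
  rw [← neg_det, ← neg_one_mul, map_mul, hχ, one_mul]

theorem isSymm_paley (hχ : quadraticChar K (-1) = 1) : (paley (K := K)).IsSymm :=
  Matrix.IsSymm.ext fun s t => paley_comm hχ t s

/-- The function on the plane equal to `a t + b t * quadraticChar K z` at the nonzero multiples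
`z • rep t` of each point `rep t` of the projective line. -/
def spread (a b : Option K → ℤ) : K × K → ℤ :=
  ∑ t, lineFun (fun z => a t + b t * quadraticChar K z) (rep t)

variable {a b : Option K → ℤ}

theorem spread_zero : spread a b 0 = ∑ t, a t := by
  simp [spread, lineFun_zero (rep_ne_zero _)]

theorem spread_smul_rep {z : K} (hz : z ≠ 0) (t : Option K) :
    spread a b (z • rep t) = a t + b t * quadraticChar K z := by
  simp [spread, lineFun_smul_rep hz]

theorem mul_eq_zero_of_sq_add_sq_eq_one {x y : ℤ} (h : x ^ 2 + y ^ 2 = 1) : x * y = 0 := by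
  by_contra hxy
  have hx : 0 < x ^ 2 := pow_two_pos_of_ne_zero (left_ne_zero_of_mul hxy)
  have hy : 0 < y ^ 2 := pow_two_pos_of_ne_zero (right_ne_zero_of_mul hxy)
  lia

theorem spread_sq (hab : ∀ t, a t ^ 2 + b t ^ 2 = 1) (ha : ∑ t, a t = 1) (x : K × K) :
    spread a b x ^ 2 = 1 := by
  by_cases hx : x = 0
  · rw [hx, spread_zero, ha, one_pow]
  · obtain ⟨z, hz, t, rfl⟩ := exists_eq_smul_rep hx
    rw [spread_smul_rep hz]
    linear_combination hab t + b t ^ 2 * quadraticChar_sq_one hz +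
      2 * quadraticChar K z * mul_eq_zero_of_sq_add_sq_eq_one (hab t)

theorem sum_spread (hK : ringChar K ≠ 2) :
    ∑ x, spread a b x = Fintype.card K * ∑ t, a t := by
  simp only [spread, Finset.sum_apply]
  rw [Finset.sum_comm, Finset.mul_sum]
  simp only [sum_lineFun, sum_const_add_mul_quadraticChar hK]

variable {a' b' : Option K → ℤ}

theorem crossCorr_spread_zero (hK : ringChar K ≠ 2) :
    crossCorr (spread a b) (spread a' b') 0 =
      (∑ t, a t) * (∑ t, a' t) + (Fintype.card K - 1) * (a ⬝ᵥ a' + b ⬝ᵥ b') := by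
  have line (s t : Option K) :
      crossCorr (lineFun (fun z => a s + b s * quadraticChar K z) (rep s))
          (lineFun (fun z => a' t + b' t * quadraticChar K z) (rep t)) 0 =
        a s * a' t +
          if s = t then (Fintype.card K - 1) * (a s * a' s + b s * b' s) else 0 := by
    by_cases h : s = t
    · subst h
      rw [← zero_smul K (rep s), crossCorr_lineFun_smul (rep_ne_zero s),
        crossCorr_const_add_mul_quadraticChar hK, if_pos rfl, if_pos rfl]
      ring
    · rw [crossCorr_lineFun_of_det_ne_zero (mt det_rep_eq_zero_iff.1 h), if_neg h]
      simp [det]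
  simp only [spread, crossCorr_sum_sum, line, Finset.sum_add_distrib, Finset.sum_ite_eq,
    Finset.mem_univ, if_true, Finset.sum_mul_sum, dotProduct, ← Finset.mul_sum]

theorem crossCorr_lineFun_rep (hK : ringChar K ≠ 2) {z : K} (hz : z ≠ 0) (a b a' b' : ℤ)
    (r s t : Option K) :
    crossCorr (lineFun (fun z => a + b * quadraticChar K z) (rep s))
        (lineFun (fun z => a' + b' * quadraticChar K z) (rep t)) (z • rep r) =
      a * a' + quadraticChar K z * (paley r s * (a * (paley s t * b'))) +
        quadraticChar K z * (paley r t * (a' * (paley s t * b))) +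
        paley r s * b * (paley r t * b') +
        if s = t then (if r = s then Fintype.card K * (a * a') else 0) - a * a' - b * b'
        else 0 := by
  by_cases hst : s = t
  · subst hst
    rw [if_pos rfl, paley_self]
    by_cases hrs : r = s
    · subst hrs
      rw [crossCorr_lineFun_smul (rep_ne_zero r), crossCorr_const_add_mul_quadraticChar hK,
        if_neg hz, if_pos rfl, paley_self]
      ring
    · have ne : det (z • rep r) (rep s) ≠ 0 := by
        rw [det_smul_left]
        exact mul_ne_zero hz (mt det_rep_eq_zero_iff.1 hrs)
      rw [crossCorr_lineFun_eq_zero ne, if_neg hrs]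
      linear_combination -(b * b') * paley_sq hrs
  · rw [crossCorr_lineFun_of_det_ne_zero (mt det_rep_eq_zero_iff.1 hst), if_neg hst]
    have eval (u : Option K) : quadraticChar K (det (z • rep r) (rep u) / det (rep s) (rep t)) =
        quadraticChar K z * paley r u * paley s t := by
      rw [quadraticChar_div, det_smul_left, map_mul]
      rfl
    simp only [eval]
    linear_combination b * b' * paley r s * paley r t * paley s t ^ 2 * quadraticChar_sq_one hz +
      b * b' * paley r s * paley r t * paley_sq hst

open Matrix in
theorem crossCorr_spread_smul_rep (hK : ringChar K ≠ 2) (hχ : quadraticChar K (-1) = 1) {z : K}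
    (hz : z ≠ 0) (r : Option K) :
    crossCorr (spread a b) (spread a' b') (z • rep r) =
      (∑ t, a t) * (∑ t, a' t) +
        quadraticChar K z * (paley r ⬝ᵥ (a * (paley *ᵥ b') + a' * (paley *ᵥ b))) +
        (paley *ᵥ b) r * (paley *ᵥ b') r + Fintype.card K * (a r * a' r) -
        (a ⬝ᵥ a' + b ⬝ᵥ b') := by
  have left : ∑ s, ∑ t, quadraticChar K z * (paley r s * (a s * (paley s t * b' t))) =
      quadraticChar K z * (paley r ⬝ᵥ (a * (paley *ᵥ b'))) := by
    simp only [← Finset.mul_sum]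
    rfl
  have mulVec_eq (t : Option K) : ∑ s, paley s t * b s = (paley *ᵥ b) t :=
    Finset.sum_congr rfl fun s _ => by rw [paley_comm hχ]
  have right : ∑ s, ∑ t, quadraticChar K z * (paley r t * (a' t * (paley s t * b s))) =
      quadraticChar K z * (paley r ⬝ᵥ (a' * (paley *ᵥ b))) := by
    rw [Finset.sum_comm]
    simp only [← Finset.mul_sum, mulVec_eq]
    rfl
  have both : ∑ s, ∑ t, paley r s * b s * (paley r t * b' t) =
      (paley *ᵥ b) r * (paley *ᵥ b') r := (Finset.sum_mul_sum ..).symm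
  simp only [spread, crossCorr_sum_sum, crossCorr_lineFun_rep hK hz, Finset.sum_add_distrib,
    Finset.sum_ite_eq, Finset.mem_univ, if_true, Finset.sum_sub_distrib, left, right, both,
    Finset.sum_mul_sum, dotProduct_add]
  simp only [dotProduct]
  ring

end Spread

section SwappedPair

open Matrix Finset

theorem exists_sum_eq_one_of_odd_card {T : Type*} [Fintype T] [DecidableEq T] {S : Finset T}
    (hS : Odd S.card) :
    ∃ σ : T → ℤ, (∀ t, σ t ^ 2 = if t ∈ S then 1 else 0) ∧ ∑ t, σ t = 1 := by
  obtain ⟨k, hk⟩ := hS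
  obtain ⟨N, hNS, hN⟩ := Finset.exists_subset_card_eq (s := S) (n := k) (by lia)
  refine ⟨fun t => (if t ∈ S then 1 else 0) - 2 * if t ∈ N then 1 else 0, fun t => ?_, ?_⟩
  · by_cases hS : t ∈ S
    · by_cases hN : t ∈ N <;> simp [hS, hN]
    · simp [hS, mt (@hNS t) hS]
  · simp [hk, hN]
    ring

/-- Two `{0, ±1}`-valued vectors with complementary supports that `M` interchanges up to the
factor `q`. -/
structure IsSwappedPair {T : Type*} [Fintype T] (M : Matrix T T ℤ) (q : ℤ) (B : Fin 2 → T → ℤ) :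
    Prop where
  sq_add_sq : ∀ i t, B i t ^ 2 + B (i + 1) t ^ 2 = 1
  mulVec_eq : ∀ i, M *ᵥ B i = q • B (i + 1)

variable {T : Type*} [Fintype T] {M : Matrix T T ℤ} {q : ℤ} {B : Fin 2 → T → ℤ}

theorem isSwappedPair_of_eigenvectors {x y : T → ℤ} (hx : ∀ t, x t ^ 2 = 1)
    (hy : ∀ t, y t ^ 2 = 1) (hMx : M *ᵥ x = q • x) (hMy : M *ᵥ y = -q • y) :
    IsSwappedPair M q
      ![fun t => if x t = y t then x t else 0, fun t => if x t = y t then 0 else x t] := by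
  set b₀ : T → ℤ := fun t => if x t = y t then x t else 0 with hb₀
  set b₁ : T → ℤ := fun t => if x t = y t then 0 else x t with hb₁
  have add_eq : (2 : ℤ) • b₀ = x + y := by
    ext t
    rcases sq_eq_one_iff.1 (hx t) with h | h <;> rcases sq_eq_one_iff.1 (hy t) with h' | h' <;>
      simp [hb₀, h, h']
  have sub_eq : (2 : ℤ) • b₁ = x - y := by
    ext t
    rcases sq_eq_one_iff.1 (hx t) with h | h <;> rcases sq_eq_one_iff.1 (hy t) with h' | h' <;>
      simp [hb₁, h, h']
  have mulVec_b₀ : M *ᵥ b₀ = q • b₁ := smul_right_injective _ (two_ne_zero (α := ℤ)) <| by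
    change (2 : ℤ) • M *ᵥ b₀ = (2 : ℤ) • q • b₁
    rw [← mulVec_smul, smul_comm, add_eq, sub_eq, mulVec_add, hMx, hMy, neg_smul,
      ← sub_eq_add_neg, smul_sub]
  have mulVec_b₁ : M *ᵥ b₁ = q • b₀ := smul_right_injective _ (two_ne_zero (α := ℤ)) <| by
    change (2 : ℤ) • M *ᵥ b₁ = (2 : ℤ) • q • b₀
    rw [← mulVec_smul, smul_comm, add_eq, sub_eq, mulVec_sub, hMx, hMy, neg_smul,
      sub_neg_eq_add, smul_add]
  constructor
  · rw [Fin.forall_fin_two]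
    constructor <;> intro t <;> by_cases h : x t = y t <;> simp [hb₀, hb₁, h, hx, hy]
  · rw [Fin.forall_fin_two]
    exact ⟨mulVec_b₀, mulVec_b₁⟩

namespace IsSwappedPair

theorem mul_eq_zero (hB : IsSwappedPair M q B) (i : Fin 2) (t : T) : B i t * B (i + 1) t = 0 :=
  mul_eq_zero_of_sq_add_sq_eq_one (hB.sq_add_sq i t)

theorem two_mul_dotProduct_self (hB : IsSwappedPair M q B) (hM : M.IsSymm) (hq : q ≠ 0)
    (i : Fin 2) : 2 * (B i ⬝ᵥ B i) = Fintype.card T := by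
  have swap : B (i + 1) ⬝ᵥ B (i + 1) = B i ⬝ᵥ B i := by
    refine mul_left_cancel₀ hq ?_
    calc q * (B (i + 1) ⬝ᵥ B (i + 1))
      _ = M *ᵥ B i ⬝ᵥ B (i + 1) := by rw [hB.mulVec_eq, smul_dotProduct, smul_eq_mul]
      _ = B i ⬝ᵥ M *ᵥ B (i + 1) := by rw [dotProduct_mulVec, ← mulVec_transpose, hM.eq]
      _ = q * (B i ⬝ᵥ B i) := by
          rw [hB.mulVec_eq, dotProduct_smul, smul_eq_mul, add_assoc]
          simp
  calc 2 * (B i ⬝ᵥ B i)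
    _ = B i ⬝ᵥ B i + B (i + 1) ⬝ᵥ B (i + 1) := by rw [swap, two_mul]
    _ = ∑ t, (B i t ^ 2 + B (i + 1) t ^ 2) := by simp only [dotProduct, Finset.sum_add_distrib, sq]
    _ = Fintype.card T := by simp [hB.sq_add_sq]

theorem sq_eq (hB : IsSwappedPair M q B) (i : Fin 2) (t : T) :
    B i t ^ 2 = if B i t ≠ 0 then 1 else 0 := by
  split_ifs with h
  · have h' := (_root_.mul_eq_zero.1 (hB.mul_eq_zero i t)).resolve_left h
    simpa [h'] using hB.sq_add_sq i t
  · rw [not_not.1 h, zero_pow two_ne_zero]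

theorem odd_card_support (hB : IsSwappedPair M q B) (hM : M.IsSymm) (hq : Odd q)
    (hT : (Fintype.card T : ℤ) = q ^ 2 + 1) (i : Fin 2) : Odd #{t | B i t ≠ 0} := by
  have card_eq : (#{t | B i t ≠ 0} : ℤ) = B i ⬝ᵥ B i := by
    simp only [dotProduct, ← sq, hB.sq_eq, card_filter, Nat.cast_sum, Nat.cast_ite, Nat.cast_one,
      Nat.cast_zero]
  have two_mul := hB.two_mul_dotProduct_self hM (by rintro rfl; simp at hq) i
  obtain ⟨k, rfl⟩ := hq
  rw [← Int.odd_coe_nat]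
  exact ⟨k ^ 2 + k, by linarith⟩

end IsSwappedPair

/-- A swapped pair `B` together with choices of signs, one on the support of each `B (i + 1)`, with
sum `1`. -/
structure IsSignedPair {T : Type*} [Fintype T] (M : Matrix T T ℤ) (q : ℤ) (A B : Fin 2 → T → ℤ) :
    Prop extends IsSwappedPair M q B where
  sign_sq : ∀ i t, A i t ^ 2 = B (i + 1) t ^ 2
  sign_sum : ∀ i, ∑ t, A i t = 1

theorem IsSwappedPair.exists_isSignedPair (hB : IsSwappedPair M q B) (hM : M.IsSymm) (hq : Odd q)
    (hT : (Fintype.card T : ℤ) = q ^ 2 + 1) : ∃ A, IsSignedPair M q A B := by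
  classical
  choose A hA using fun i => exists_sum_eq_one_of_odd_card (hB.odd_card_support hM hq hT (i + 1))
  refine ⟨A, hB, fun i t => ?_, fun i => (hA i).2⟩
  simp only [(hA i).1, hB.sq_eq, mem_filter_univ]

namespace IsSignedPair

variable {A : Fin 2 → T → ℤ}

theorem sign_mul (h : IsSignedPair M q A B) (i : Fin 2) : A i * B i = 0 := by
  ext t
  rw [Pi.mul_apply, Pi.zero_apply, ← sq_eq_zero_iff, mul_pow, h.sign_sq, ← mul_pow, mul_comm,
    h.mul_eq_zero, zero_pow two_ne_zero]

theorem sign_mul_sign (h : IsSignedPair M q A B) (i : Fin 2) (t : T) : A i t * A (i + 1) t = 0 := by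
  rw [← sq_eq_zero_iff, mul_pow, h.sign_sq, h.sign_sq, ← mul_pow, h.mul_eq_zero,
    zero_pow two_ne_zero]

theorem two_mul_dotProduct_sign_self (h : IsSignedPair M q A B) (hM : M.IsSymm) (hq : q ≠ 0)
    (i : Fin 2) : 2 * (A i ⬝ᵥ A i) = Fintype.card T := by
  rw [← h.two_mul_dotProduct_self hM hq (i + 1)]
  simp only [dotProduct, ← sq, h.sign_sq]

end IsSignedPair

end SwappedPair

section SpreadQuadruple

open Matrix

variable {K : Type*} [Field K] [Fintype K] [DecidableEq K] {q : ℕ} {A B : Fin 2 → Option K → ℤ}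

theorem IsSignedPair.crossCorr_spread (hK : ringChar K ≠ 2) (hχ : quadraticChar K (-1) = 1)
    (h : IsSignedPair paley (q : ℤ) A B) (hcard : Fintype.card K = q ^ 2)
    (i j : Fin 2) (c d : ℤ) {z : K} (hz : z ≠ 0) (r : Option K) :
    crossCorr (spread (A i) (c • B i)) (spread (A j) (d • B j)) (z • rep r) =
      1 + quadraticChar K z * q *
          (paley r ⬝ᵥ (d • (A i * B (j + 1)) + c • (A j * B (i + 1)))) +
        q ^ 2 * (A i r * A j r + c * d * (B (i + 1) r * B (j + 1) r)) -
        (A i ⬝ᵥ A j + c * d * (B i ⬝ᵥ B j)) := by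
  rw [crossCorr_spread_smul_rep hK hχ hz, h.sign_sum, h.sign_sum, hcard]
  simp only [mulVec_smul, h.mulVec_eq, smul_comm _ (q : ℤ), mul_smul_comm, ← smul_add,
    dotProduct_smul, smul_dotProduct, Pi.smul_apply, smul_eq_mul]
  push_cast
  ring

theorem IsSignedPair.dotProduct_paley (h : IsSignedPair paley (q : ℤ) A B)
    (hχ : quadraticChar K (-1) = 1) (hcard : Fintype.card K = q ^ 2) (i : Fin 2) :
    A i ⬝ᵥ A i = B i ⬝ᵥ B i ∧ A i ⬝ᵥ A i + B i ⬝ᵥ B i = q ^ 2 + 1 := by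
  have hq : (q : ℤ) ≠ 0 := by
    rintro hq
    have := Fintype.card_pos (α := K)
    simp_all
  have hT : (Fintype.card (Option K) : ℤ) = q ^ 2 + 1 := by simp [hcard]
  have AA := h.two_mul_dotProduct_sign_self (isSymm_paley hχ) hq i
  have BB := h.two_mul_dotProduct_self (isSymm_paley hχ) hq i
  exact ⟨by linarith, by linarith⟩

theorem IsSignedPair.crossCorr_spread_succ (hK : ringChar K ≠ 2) (hχ : quadraticChar K (-1) = 1)
    (h : IsSignedPair paley (q : ℤ) A B) (hcard : Fintype.card K = q ^ 2)
    (i : Fin 2) (c d : ℤ) (g : K × K) :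
    crossCorr (spread (A i) (c • B i)) (spread (A (i + 1)) (d • B (i + 1))) g = 1 := by
  have AA : A i ⬝ᵥ A (i + 1) = 0 := by simp [dotProduct, h.sign_mul_sign]
  have BB : B i ⬝ᵥ B (i + 1) = 0 := by simp [dotProduct, h.mul_eq_zero]
  by_cases hg : g = 0
  · rw [hg, crossCorr_spread_zero hK, h.sign_sum, h.sign_sum, AA, smul_dotProduct,
      dotProduct_smul, BB]
    simp
  · obtain ⟨z, hz, r, rfl⟩ := exists_eq_smul_rep hg
    rw [h.crossCorr_spread hK hχ hcard _ _ _ _ hz, AA, BB, h.sign_mul_sign, h.mul_eq_zero,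
      add_assoc i, show (1 + 1 : Fin 2) = 0 from rfl, add_zero, h.sign_mul, h.sign_mul]
    simp

theorem IsSignedPair.crossCorr_spread_neg (hK : ringChar K ≠ 2) (hχ : quadraticChar K (-1) = 1)
    (h : IsSignedPair paley (q : ℤ) A B) (hcard : Fintype.card K = q ^ 2)
    (i : Fin 2) {c : ℤ} (hc : c ^ 2 = 1) (g : K × K) :
    crossCorr (spread (A i) (c • B i)) (spread (A i) (-c • B i)) g = 1 := by
  have AA := (h.dotProduct_paley hχ hcard i).1
  by_cases hg : g = 0
  · rw [hg, crossCorr_spread_zero hK, h.sign_sum, AA, smul_dotProduct, dotProduct_smul]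
    simp only [smul_eq_mul]
    linear_combination (Fintype.card K - 1) * (B i ⬝ᵥ B i) * (-hc)
  · obtain ⟨z, hz, r, rfl⟩ := exists_eq_smul_rep hg
    rw [h.crossCorr_spread hK hχ hcard _ _ _ _ hz, AA, neg_smul, neg_add_cancel,
      dotProduct_zero]
    linear_combination (B i ⬝ᵥ B i - q ^ 2 * B (i + 1) r ^ 2) * hc + q ^ 2 * h.sign_sq i r

theorem IsSignedPair.crossCorr_spread_self (hK : ringChar K ≠ 2) (hχ : quadraticChar K (-1) = 1)
    (h : IsSignedPair paley (q : ℤ) A B) (hcard : Fintype.card K = q ^ 2)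
    (i : Fin 2) {c : ℤ} (hc : c ^ 2 = 1) {z : K} (hz : z ≠ 0) (r : Option K) :
    crossCorr (spread (A i) (c • B i)) (spread (A i) (c • B i)) (z • rep r) =
      2 * (c * (quadraticChar K z * q * (paley r ⬝ᵥ (A i * B (i + 1))))) +
        2 * q ^ 2 * A i r ^ 2 - q ^ 2 := by
  rw [h.crossCorr_spread hK hχ hcard _ _ _ _ hz, ← two_smul ℤ (c • _), dotProduct_smul,
    dotProduct_smul]
  simp only [smul_eq_mul]
  linear_combination (q ^ 2 * B (i + 1) r ^ 2 - B i ⬝ᵥ B i) * hc - q ^ 2 * h.sign_sq i r -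
    (h.dotProduct_paley hχ hcard i).2

/-- The quadruple on the plane built from a signed pair; the signs `hadamardSign p` only normalize
the sums. -/
def spreadQuadruple (A B : Fin 2 → Option K → ℤ) (p : Fin 2 × Fin 2) : K × K → ℤ :=
  hadamardSign p • spread (A p.1) (hadamardSign (1, p.2) • B p.1)

theorem IsSignedPair.spreadQuadruple_sq (h : IsSignedPair paley (q : ℤ) A B)
    (p : Fin 2 × Fin 2) (x : K × K) : spreadQuadruple A B p x ^ 2 = 1 := by
  have squares (t : Option K) : A p.1 t ^ 2 + (hadamardSign (1, p.2) • B p.1) t ^ 2 = 1 := by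
    rw [Pi.smul_apply, smul_eq_mul, mul_pow, hadamardSign_sq, one_mul, h.sign_sq, add_comm,
      h.sq_add_sq]
  rw [spreadQuadruple, Pi.smul_apply, smul_eq_mul, mul_pow, hadamardSign_sq, one_mul,
    spread_sq squares (h.sign_sum _)]

theorem IsSignedPair.crossCorr_spreadQuadruple (hK : ringChar K ≠ 2)
    (hχ : quadraticChar K (-1) = 1) (h : IsSignedPair paley (q : ℤ) A B)
    (hcard : Fintype.card K = q ^ 2) {p p' : Fin 2 × Fin 2} (hne : p ≠ p') (g : K × K) :
    crossCorr (spreadQuadruple A B p) (spreadQuadruple A B p') g =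
      hadamardSign p * hadamardSign p' := by
  obtain ⟨i, j⟩ := p
  obtain ⟨k, l⟩ := p'
  rw [spreadQuadruple, spreadQuadruple, crossCorr_smul_smul]
  refine mul_right_eq_self₀.2 (.inl ?_)
  by_cases hik : i = k
  · subst hik
    have neg : hadamardSign (1, l) = -hadamardSign (1, j) := by
      have hjl : j ≠ l := fun hjl => hne (by rw [hjl])
      clear hne
      revert j l
      decide
    rw [neg]
    exact h.crossCorr_spread_neg hK hχ hcard i (hadamardSign_sq _) g
  · obtain rfl : k = i + 1 := by lia
    exact h.crossCorr_spread_succ hK hχ hcard i _ _ g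

theorem IsSignedPair.isMenonQuadruple (hK : ringChar K ≠ 2) (hχ : quadraticChar K (-1) = 1)
    (h : IsSignedPair paley (q : ℤ) A B) (hcard : Fintype.card K = q ^ 2) :
    IsMenonQuadruple (q ^ 2) (spreadQuadruple A B) where
  sq_eq_one := h.spreadQuadruple_sq
  card := by rw [Fintype.card_prod, hcard]; ring
  sum p := by
    simp only [spreadQuadruple, Pi.smul_apply, ← Finset.smul_sum, sum_spread hK, h.sign_sum, hcard]
    simp
  cross _ _ hne g := h.crossCorr_spreadQuadruple hK hχ hcard hne g
  auto g hg := by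
    obtain ⟨z, hz, r, rfl⟩ := exists_eq_smul_rep hg
    have squares : A 0 r ^ 2 + A 1 r ^ 2 = 1 := by
      rw [h.sign_sq, h.sign_sq]
      exact h.sq_add_sq 1 r
    simp only [spreadQuadruple, crossCorr_smul_smul, ← sq, hadamardSign_sq, one_mul,
      h.crossCorr_spread_self hK hχ hcard _ (hadamardSign_sq _) hz, Fintype.sum_prod_type,
      Fin.sum_univ_two, show hadamardSign (1, 0) = 1 from rfl,
      show hadamardSign (1, 1) = -1 from rfl]
    linear_combination 4 * (q : ℤ) ^ 2 * squares

end SpreadQuadruple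

section Eigenvectors

open Matrix

variable {K : Type*} [Field K] [Fintype K] [DecidableEq K]

theorem paley_mulVec_elim_eq_smul (hχ : quadraticChar K (-1) = 1) {x : K → ℤ} {c l : ℤ}
    (hsum : ∑ t, x t = l * c) (hcorr : ∀ t, crossCorr x (quadraticChar K) t = l * x t - c) :
    paley *ᵥ (fun t => Option.elim t c x) = l • fun t => Option.elim t c x := by
  have paley_none_some (t : K) : paley none (some t) = 1 := by simpa [paley, det, rep] using hχ
  have paley_some_none (t : K) : paley (some t) none = 1 := by simp [paley, det, rep]
  have paley_some_some (s t : K) : paley (some s) (some t) = quadraticChar K (t - s) := by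
    simp [paley, det, rep]
  ext (_ | s)
  · simp [mulVec, dotProduct, Fintype.sum_option, paley_self, paley_none_some, hsum]
  · have translate : ∑ t, quadraticChar K (t - s) * x t = l * x s - c := by
      rw [← hcorr, crossCorr, ← Equiv.sum_comp (Equiv.addRight s)]
      simp [mul_comm, -quadraticChar_apply]
    simp only [mulVec, dotProduct, Fintype.sum_option, paley_some_none, paley_some_some,
      Option.elim_none, Option.elim_some, translate, Pi.smul_apply, smul_eq_mul]
    ring

theorem crossCorr_comp_mul_quadraticChar {c : K} (hc : c ≠ 0) (x : K → ℤ) (t : K) :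
    crossCorr (fun s => x (c * s)) (quadraticChar K) t =
      quadraticChar K c * crossCorr x (quadraticChar K) (c * t) := by
  rw [crossCorr, crossCorr, Finset.mul_sum, ← Equiv.sum_comp (Equiv.mulLeft₀ c hc)
    fun s => quadraticChar K c * (x (s + c * t) * quadraticChar K s)]
  refine Finset.sum_congr rfl fun s _ => ?_
  rw [Equiv.mulLeft₀_apply, map_mul, mul_add]
  linear_combination -x (c * s + c * t) * quadraticChar K s * quadraticChar_sq_one hc

theorem exists_isSwappedPair_paley (hK : ringChar K ≠ 2) (hχ : quadraticChar K (-1) = 1) {q : ℤ}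
    {x : K → ℤ} (hx : ∀ t, x t ^ 2 = 1) (hsum : ∑ t, x t = q)
    (hcorr : ∀ t, crossCorr x (quadraticChar K) t = q * x t - 1) :
    ∃ B, IsSwappedPair (paley (K := K)) q B := by
  obtain ⟨c, hc⟩ := quadraticChar_exists_neg_one hK
  have c_ne_zero : c ≠ 0 := by
    rintro rfl
    simp at hc
  let y (t : K) : ℤ := x (c * t)
  have sum_y : ∑ t, y t = -q * -1 := by
    rw [neg_mul_neg, mul_one, ← hsum]
    exact Equiv.sum_comp (Equiv.mulLeft₀ c c_ne_zero) x
  have corr_y (t : K) : crossCorr y (quadraticChar K) t = -q * y t - -1 := by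
    rw [crossCorr_comp_mul_quadraticChar c_ne_zero, hc, hcorr]
    ring
  refine ⟨_, isSwappedPair_of_eigenvectors ?_ ?_
    (paley_mulVec_elim_eq_smul hχ (hsum.trans (mul_one q).symm) hcorr)
    (paley_mulVec_elim_eq_smul hχ sum_y corr_y)⟩
  · rintro (_ | t) <;> simp [hx]
  · rintro (_ | t) <;> simp [y, hx]

end Eigenvectors

section QuadraticExtension

theorem quadraticChar_algebraMap {F K : Type*} [Field F] [Fintype F] [Field K] [Fintype K]
    [DecidableEq K] [Algebra F K] (hF : ringChar F ≠ 2)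
    (hcard : Fintype.card K = Fintype.card F ^ 2) {c : F} (hc : c ≠ 0) :
    quadraticChar K (algebraMap F K c) = 1 := by
  have hK : ringChar K ≠ 2 := by rwa [← Algebra.ringChar_eq F K]
  have c_ne_zero : algebraMap F K c ≠ 0 := (map_ne_zero _).2 hc
  obtain ⟨k, hk⟩ := Nat.odd_iff.2 (FiniteField.odd_card_of_char_ne_two hF)
  have half : Fintype.card K / 2 = (Fintype.card F - 1) * (k + 1) := by
    rw [hcard, hk, show (2 * k + 1) ^ 2 = 1 + 2 * (2 * k * (k + 1)) by ring]
    lia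
  rw [quadraticChar_one_iff_isSquare c_ne_zero, FiniteField.isSquare_iff hK c_ne_zero, half,
    pow_mul, ← map_pow, FiniteField.pow_card_sub_one_eq_one c hc, map_one, one_pow]

variable {F : Type*} [Fintype F] {a b : F} [Fintype (QuadraticAlgebra F a b)]

theorem card_quadraticAlgebra :
    Fintype.card (QuadraticAlgebra F a b) = Fintype.card F ^ 2 := by
  rw [Fintype.card_congr (QuadraticAlgebra.equivProd a b), Fintype.card_prod, sq]

theorem sum_quadraticAlgebra (φ : QuadraticAlgebra F a b → ℤ) :
    ∑ x, φ x = ∑ c, ∑ r, φ ⟨r, c⟩ := by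
  rw [← Equiv.sum_comp (QuadraticAlgebra.equivProd a b).symm, Fintype.sum_prod_type_right]
  rfl

variable [Field F] [Fact (∀ r, r ^ 2 ≠ a + b * r)] [DecidableEq (QuadraticAlgebra F a b)]

theorem sum_quadraticChar_mk_zero (hF : ringChar F ≠ 2) :
    ∑ r, quadraticChar (QuadraticAlgebra F a b) ⟨r, 0⟩ = (Fintype.card F : ℤ) - 1 := by
  classical
  have eval (r : F) :
      quadraticChar (QuadraticAlgebra F a b) ⟨r, 0⟩ = 1 - if r = 0 then 1 else 0 := by
    by_cases hr : r = 0
    · rw [if_pos hr, hr, sub_self]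
      exact MulChar.map_zero _
    · rw [if_neg hr, sub_zero]
      exact quadraticChar_algebraMap hF card_quadraticAlgebra hr
  simp [eval, Finset.sum_sub_distrib, -quadraticChar_apply]

theorem sum_quadraticChar_mk_eq_sum_mk_one (hF : ringChar F ≠ 2) {c : F} (hc : c ≠ 0) :
    ∑ r, quadraticChar (QuadraticAlgebra F a b) ⟨r, c⟩ =
      ∑ r, quadraticChar (QuadraticAlgebra F a b) ⟨r, 1⟩ := by
  rw [← Equiv.sum_comp (Equiv.mulLeft₀ c hc)]
  refine Finset.sum_congr rfl fun r _ => ?_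
  have factor : (⟨Equiv.mulLeft₀ c hc r, c⟩ : QuadraticAlgebra F a b) =
      algebraMap F (QuadraticAlgebra F a b) c * ⟨r, 1⟩ := by
    ext <;> simp
  rw [factor, map_mul, quadraticChar_algebraMap hF card_quadraticAlgebra hc, one_mul]

theorem sum_quadraticChar_mk [DecidableEq F] (hF : ringChar F ≠ 2) (c : F) :
    ∑ r, quadraticChar (QuadraticAlgebra F a b) ⟨r, c⟩ =
      (if c = 0 then (Fintype.card F : ℤ) else 0) - 1 := by
  set N : F → ℤ := fun c => ∑ r, quadraticChar (QuadraticAlgebra F a b) ⟨r, c⟩ with hN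
  have N_zero : N 0 = Fintype.card F - 1 := sum_quadraticChar_mk_zero hF
  have N_eq (c : F) : N c = N 1 + if c = 0 then N 0 - N 1 else 0 := by
    by_cases hc : c = 0
    · simp [hc]
    · rw [if_neg hc, add_zero]
      exact sum_quadraticChar_mk_eq_sum_mk_one hF hc
  have N_one : N 1 = -1 := by
    have sum_N : ∑ c, N c = 0 := by
      rw [hN, ← sum_quadraticAlgebra, quadraticChar_sum_zero]
      rwa [← Algebra.ringChar_eq F]
    have card_sub_one_ne_zero : (Fintype.card F : ℤ) - 1 ≠ 0 := by
      have := Fintype.one_lt_card (α := F)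
      lia
    rw [Finset.sum_congr rfl fun c _ => N_eq c] at sum_N
    simp only [Finset.sum_add_distrib, Finset.sum_const, Finset.card_univ, nsmul_eq_mul,
      Finset.sum_ite_eq', Finset.mem_univ, if_true] at sum_N
    refine mul_left_cancel₀ card_sub_one_ne_zero ?_
    linear_combination sum_N - N_zero
  change N c = _
  rw [N_eq, N_zero, N_one]
  split_ifs <;> ring

theorem crossCorr_im_quadraticChar (hF : ringChar F ≠ 2) (σ : F → ℤ) (x : QuadraticAlgebra F a b) :
    crossCorr (fun z : QuadraticAlgebra F a b => σ z.im) (quadraticChar _) x =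
      Fintype.card F * σ x.im - ∑ c, σ c := by
  classical
  rw [crossCorr, sum_quadraticAlgebra]
  simp only [QuadraticAlgebra.im_add, ← Finset.mul_sum, sum_quadraticChar_mk hF, mul_sub,
    Finset.sum_sub_distrib]
  rw [← Equiv.sum_comp (Equiv.addRight x.im) σ]
  simp [mul_comm]

end QuadraticExtension

theorem exists_isMenonQuadruple_quadraticAlgebra {F : Type*} [Field F] [Fintype F]
    (hF : ringChar F ≠ 2) {a b : F} [Fact (∀ r, r ^ 2 ≠ a + b * r)]
    [Fintype (QuadraticAlgebra F a b)] :
    ∃ f : Fin 2 × Fin 2 → QuadraticAlgebra F a b × QuadraticAlgebra F a b → ℤ,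
      IsMenonQuadruple (Fintype.card F ^ 2) f := by
  classical
  have hodd : Odd (Fintype.card F) := Nat.odd_iff.2 (FiniteField.odd_card_of_char_ne_two hF)
  have hK : ringChar (QuadraticAlgebra F a b) ≠ 2 := by rwa [← Algebra.ringChar_eq F]
  have hχ : quadraticChar (QuadraticAlgebra F a b) (-1) = 1 := by
    have h := quadraticChar_algebraMap (K := QuadraticAlgebra F a b) hF card_quadraticAlgebra
      (neg_ne_zero.2 one_ne_zero)
    rwa [map_neg, map_one] at h
  have hcard : Fintype.card (QuadraticAlgebra F a b) = Fintype.card F ^ 2 := card_quadraticAlgebra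
  obtain ⟨σ, σ_sq, sum_σ⟩ := exists_sum_eq_one_of_odd_card (S := (Finset.univ : Finset F)) hodd
  obtain ⟨B, hB⟩ := exists_isSwappedPair_paley hK hχ (q := Fintype.card F)
    (x := fun z : QuadraticAlgebra F a b => σ z.im) (fun z => by simp [σ_sq])
    (by simp [sum_quadraticAlgebra, ← Finset.mul_sum, sum_σ])
    (fun t => by rw [crossCorr_im_quadraticChar hF, sum_σ])
  obtain ⟨A, hA⟩ := hB.exists_isSignedPair (isSymm_paley hχ) (mod_cast hodd) (by simp [hcard])
  exact ⟨_, hA.isMenonQuadruple hK hχ hcard⟩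

theorem nonempty_addEquiv_of_card_eq (p : ℕ) [Fact p.Prime] {V W : Type*} [AddCommGroup V]
    [AddCommGroup W] [Finite V] [Finite W] [Module (ZMod p) V] [Module (ZMod p) W]
    (h : Nat.card V = Nat.card W) : Nonempty (V ≃+ W) := by
  rw [Module.natCard_eq_pow_finrank (K := ZMod p), Nat.card_zmod,
    Module.natCard_eq_pow_finrank (K := ZMod p), Nat.card_zmod] at h
  obtain ⟨e⟩ := FiniteDimensional.nonempty_linearEquiv_of_finrank_eq
    (Nat.pow_right_injective (Fact.out : p.Prime).two_le h)
  exact ⟨e.toAddEquiv⟩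

theorem exists_isMenonQuadruple_of_elementaryAbelian {p t : ℕ} (hp : p.Prime) (hp2 : p ≠ 2)
    (ht : 0 < t) {G : Type*} [AddCommGroup G] [Fintype G]
    (hcard : Fintype.card G = p ^ (4 * t)) (hG : ∀ x : G, p • x = 0) :
    ∃ f : Fin 2 × Fin 2 → G → ℤ, IsMenonQuadruple (p ^ (2 * t)) f := by
  have : Fact p.Prime := ⟨hp⟩
  let F := GaloisField p t
  let : Fintype F := Fintype.ofFinite F
  have cardF : Fintype.card F = p ^ t := by
    rw [← Nat.card_eq_fintype_card, GaloisField.card p t ht.ne']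
  have charF : ringChar F ≠ 2 := by rwa [ringChar.eq F p]
  obtain ⟨e, he⟩ := FiniteField.exists_nonsquare charF
  have : Fact (∀ r, r ^ 2 ≠ e + 0 * r) := ⟨fun r hr => he ⟨r, by rw [← sq, hr]; ring⟩⟩
  let K := QuadraticAlgebra F e 0
  let : Fintype K := Fintype.ofEquiv _ (QuadraticAlgebra.equivProd e 0).symm
  obtain ⟨f, hf⟩ := exists_isMenonQuadruple_quadraticAlgebra charF (a := e) (b := 0)
  let : Module (ZMod p) G := AddCommGroup.zmodModule hG
  obtain ⟨φ⟩ := nonempty_addEquiv_of_card_eq p (V := G) (W := K × K) <| by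
    rw [Nat.card_eq_fintype_card, Nat.card_eq_fintype_card, hcard, Fintype.card_prod,
      card_quadraticAlgebra, cardF]
    ring
  rw [cardF, ← pow_mul, mul_comm t] at hf
  exact ⟨_, hf.comp_addEquiv φ⟩

end MenonHadamard

/-- Chen's theorem: for odd primes `p₁, …, p_s` and positive integers `t₁, …, t_s`,
any group `H × G₁ × ⋯ × G_s`, with `H` of order 4 and `Gᵢ` elementary abelian of
order `pᵢ^{4tᵢ}`, contains a Menon–Hadamard difference set with
`m = p₁^{2t₁} ⋯ p_s^{2t_s}`. -/
theorem chen_menon_hadamard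
    (s : ℕ) (hs : 0 < s) (P : Fin s → ℕ) (t : Fin s → ℕ)
    (hP : ∀ i, (P i).Prime) (hPodd : ∀ i, P i ≠ 2) (ht : ∀ i, 0 < t i)
    (H : Type) [AddCommGroup H] [Fintype H] (hH : Fintype.card H = 4)
    (G : Fin s → Type) [∀ i, AddCommGroup (G i)] [∀ i, Fintype (G i)]
    (hGcard : ∀ i, Fintype.card (G i) = P i ^ (4 * t i))
    (hGelem : ∀ i (x : G i), P i • x = 0) :
    ∃ D : Set (H × ((i : Fin s) → G i)), IsMHDS (∏ i, P i ^ (2 * t i)) D := by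
  obtain ⟨f, hf⟩ := MenonHadamard.exists_isMenonQuadruple_pi fun i =>
    MenonHadamard.exists_isMenonQuadruple_of_elementaryAbelian (hP i) (hPodd i) (ht i)
      (hGcard i) (hGelem i)
  exact hf.exists_isMHDS H hH

end
end

section
/- Let q be an odd prime power, say q = p^s with p an odd prime. Suppose L = {L_0, L_1, ..., L_{q²}} is a spread of PG(3,q), i.e., a collection of q²+1 lines (two-dimensional F_q-subspaces of the underlying 4-dimensional space, viewed as point sets) that are pairwise skew, and suppose there exist four pairwise disjoint projective sets S_0, S_1, S_2, S_3 of type Q in PG(3,q) such that S_0 ∪ S_2 equals the set of points covered by L_0, ..., L_{(q²−1)/2} and S_1 ∪ S_3 equals the set of points covered by L_{(q²+1)/2}, ..., L_{q²}. Then for H = Z_4 and for H = Z_2 × Z_2 there exists a Menon–Hadamard difference set in H × G, where G is the elementary abelian group of order q⁴, i.e., a subset D of H × G with |D| = 2q⁴ − q² such that every non-identity element has exactly q⁴ − q² representations as a difference of two distinct elements of D. -/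
noncomputable section

/-- A projective set of type Q in `PG(3,q)`: a set of points (1-dimensional
subspaces) of size `(q⁴−1)/(4(q−1))` meeting every hyperplane (3-dimensional
subspace) in `(q−1)²/4` or `(q+1)²/4` points. -/
def IsProjTypeQ (q : ℕ) (K V : Type) [Field K] [AddCommGroup V] [Module K V]
    (S : Set (Submodule K V)) : Prop :=
  (∀ P ∈ S, Module.finrank K P = 1) ∧
  S.ncard = (q ^ 4 - 1) / (4 * (q - 1)) ∧
  ∀ W : Submodule K V, Module.finrank K W = 3 →
    {P ∈ S | P ≤ W}.ncard = (q - 1) ^ 2 / 4 ∨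
    {P ∈ S | P ≤ W}.ncard = (q + 1) ^ 2 / 4

/-! A subset of `H × V` is a family of blocks `B k ⊆ V`, `k ∈ H`. Expanding the autocorrelation of
its `±1`-valued function in the characters `χ` of `V` shows that, if it has the right size, it is a
Menon–Hadamard difference set as soon as, for each `χ`, the Fourier coefficients of the blocks form
a sequence on `H` with vanishing nontrivial autocorrelations. Over a group of order four,
`(±1, 0, 0, 0)` and `(-1, 1, 1, 1)` are such sequences, up to permutation and scaling.

Let `B k` consist of the nonzero vectors on `S k` and on `(q² - 1) / 4` lines of the half of the
spread not covered by `S k`. A nontrivial character of `V` determines a hyperplane, which contains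
exactly one line of the spread. Counting points in this hyperplane forces the four character sums
of the blocks to be `±q², 0, 0, 0` in some order. The trivial character gives four equal
coefficients `q²`, and complementing one block changes the sign of one of them. -/

open Classical in
/-- The `±1`-valued function of a subset, equal to `-1` on the subset: when `D` is a Menon–Hadamard
difference set, the matrix `(signFn D (x - y))` is a Hadamard matrix. -/
def signFn {α : Type*} (D : Set α) (x : α) : ℂ := if x ∈ D then -1 else 1

lemma sum_signFn {α : Type*} [Fintype α] (D : Set α) :
    ∑ x, signFn D x = Fintype.card α - 2 * D.ncard := by
  classical
  have h : ∀ x, signFn D x = 1 - 2 * if x ∈ D then 1 else 0 := fun x => by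
    unfold signFn; split_ifs <;> norm_num
  simp only [h, Finset.sum_sub_distrib, ← Finset.mul_sum]
  simp [Set.ncard_eq_toFinset_card', ← Set.filter_mem_univ_eq_toFinset]

section DifferenceSets

variable {G G' : Type} [AddCommGroup G] [AddCommGroup G']

lemma IsMHDS.image {m : ℕ} {D : Set G} (h : IsMHDS m D) (e : G ≃+ G') : IsMHDS m (e '' D) := by
  refine ⟨(Set.ncard_image_of_injective _ e.injective).trans h.1, fun g hg => ?_⟩
  rw [← h.2 (e.symm g) (by simpa using hg),
    ← Set.ncard_image_of_injective _ (e.toEquiv.prodCongr e.toEquiv).symm.injective]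
  congr 1
  ext ⟨x, y⟩
  simp [← map_sub, AddEquiv.eq_symm_apply]

lemma ncard_sub_eq {D : Set G} {g : G} (hg : g ≠ 0) :
    {z : G × G | z.1 ∈ D ∧ z.2 ∈ D ∧ z.1 ≠ z.2 ∧ z.1 - z.2 = g}.ncard =
      {x | x + g ∈ D ∧ x ∈ D}.ncard := by
  have hinj : Function.Injective fun x : G => (x + g, x) := fun x y h => (Prod.mk.inj h).2
  rw [← Set.ncard_image_of_injective _ hinj]
  congr 1
  ext ⟨x, y⟩
  simp only [Set.mem_ofPred_eq, Set.mem_image, Prod.mk.injEq]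
  constructor
  · rintro ⟨hx, hy, -, rfl⟩
    exact ⟨y, by simpa using ⟨hx, hy⟩, by simp⟩
  · rintro ⟨y, ⟨hx, hy⟩, rfl, rfl⟩
    exact ⟨hx, hy, by simpa using hg, by simp⟩

variable [Fintype G]

lemma four_mul_ncard_add_mem_and_mem (D : Set G) (g : G) :
    (4 * {x | x + g ∈ D ∧ x ∈ D}.ncard : ℂ) =
      Fintype.card G - 2 * ∑ x, signFn D x + ∑ x, signFn D (x + g) * signFn D x := by
  classical
  have h : ∀ x, (4 * if x + g ∈ D ∧ x ∈ D then 1 else 0 : ℂ) =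
      1 - signFn D (x + g) - signFn D x + signFn D (x + g) * signFn D x := fun x => by
    by_cases h₁ : x + g ∈ D <;> by_cases h₂ : x ∈ D <;> norm_num [signFn, h₁, h₂]
  have hshift : ∑ x, signFn D (x + g) = ∑ x, signFn D x :=
    Equiv.sum_comp (Equiv.addRight g) (signFn D)
  rw [Set.ncard_eq_toFinset_card', Set.toFinset_ofPred, Finset.card_filter, Nat.cast_sum,
    Finset.mul_sum]
  push_cast
  simp only [h, Finset.sum_add_distrib, Finset.sum_sub_distrib, hshift]
  simp
  ring

lemma isMHDS_of_sum_signFn {m : ℕ} (hG : Fintype.card G = 4 * m ^ 2) {D : Set G}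
    (hsum : ∑ x, signFn D x = 2 * m)
    (hcorr : ∀ g ≠ 0, ∑ x, signFn D (x + g) * signFn D x = 0) : IsMHDS m D := by
  have hm : m ≤ m ^ 2 := Nat.le_self_pow two_ne_zero m
  constructor
  · have h : (2 * D.ncard + 2 * m : ℂ) = 4 * m ^ 2 := by
      have hD := sum_signFn D
      rw [hsum, hG] at hD
      push_cast at hD
      linear_combination hD
    norm_cast at h
    lia
  · intro g hg
    have h := four_mul_ncard_add_mem_and_mem D g
    rw [hcorr g hg, hsum, hG, ← ncard_sub_eq hg, add_zero, eq_sub_iff_add_eq] at h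
    norm_cast at h
    lia

end DifferenceSets

section Fourier

open ComplexConjugate

variable {V : Type*} [AddCommGroup V] [Fintype V]

/-- The Fourier coefficient of `f` at the additive character `χ`, without normalization. -/
def fourierSum (f : V → ℂ) (χ : AddChar V ℂ) : ℂ := ∑ v, f v * χ v

lemma sum_fourierSum_mul_conj (f f' : V → ℂ) (g : V) :
    ∑ χ, χ (-g) * (fourierSum f χ * conj (fourierSum f' χ)) =
      Fintype.card V * ∑ v, f (v + g) * conj (f' v) := by
  classical
  have hterm : ∀ (χ : AddChar V ℂ) (x y : V),
      χ (-g) * (f x * χ x * (conj (f' y) * conj (χ y))) =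
        f x * conj (f' y) * χ (x - (y + g)) := fun χ x y => by
    rw [show x - (y + g) = -g + (x + -y) by abel, AddChar.map_add_eq_mul, AddChar.map_add_eq_mul,
      AddChar.map_neg_eq_conj χ y]
    ring
  calc ∑ χ, χ (-g) * (fourierSum f χ * conj (fourierSum f' χ))
    _ = ∑ χ : AddChar V ℂ, ∑ y, ∑ x, f x * conj (f' y) * χ (x - (y + g)) := by
      simp only [fourierSum, map_sum, map_mul, Finset.mul_sum, Finset.sum_mul, hterm]
    _ = ∑ y, ∑ x, f x * conj (f' y) * ∑ χ : AddChar V ℂ, χ (x - (y + g)) := by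
      rw [Finset.sum_comm]
      refine Finset.sum_congr rfl fun y _ => ?_
      rw [Finset.sum_comm]
      simp only [Finset.mul_sum]
    _ = Fintype.card V * ∑ v, f (v + g) * conj (f' v) := by
      simp only [AddChar.sum_apply_eq_ite, sub_eq_zero]
      simp [Finset.mul_sum, mul_comm]

lemma sum_mul_conj_prod_eq_ite {H : Type*} [AddCommGroup H] [Fintype H] [DecidableEq H]
    [DecidableEq V] (f : H → V → ℂ) (c : ℂ)
    (hf : ∀ (χ : AddChar V ℂ) (h : H),
      ∑ k, fourierSum (f (k + h)) χ * conj (fourierSum (f k) χ) = if h = 0 then c else 0)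
    (z : H × V) :
    ∑ w : H × V, f (w.1 + z.1) (w.2 + z.2) * conj (f w.1 w.2) = if z = 0 then c else 0 := by
  obtain ⟨h, g⟩ := z
  refine mul_left_cancel₀ (Nat.cast_ne_zero.2 (Fintype.card_ne_zero (α := V)) :
    (Fintype.card V : ℂ) ≠ 0) ?_
  calc Fintype.card V * ∑ w : H × V, f (w.1 + h) (w.2 + g) * conj (f w.1 w.2)
    _ = ∑ k, ∑ χ, χ (-g) * (fourierSum (f (k + h)) χ * conj (fourierSum (f k) χ)) := by
      simp only [sum_fourierSum_mul_conj, Fintype.sum_prod_type, Finset.mul_sum]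
    _ = ∑ χ : AddChar V ℂ, χ (-g) * if h = 0 then c else 0 := by
      rw [Finset.sum_comm]
      simp only [← Finset.mul_sum, hf]
    _ = Fintype.card V * if (h, g) = 0 then c else 0 := by
      rw [← Finset.sum_mul, AddChar.sum_apply_eq_ite]
      by_cases hh : h = 0 <;> by_cases hg : g = 0 <;> simp [hh, hg]

end Fourier

section Blocks

variable {V : Type*} [AddCommGroup V]

/-- The character sum `χ(A)` of a subset `A`. -/
def charSum (χ : AddChar V ℂ) (A : Set V) : ℂ := ∑ᶠ v ∈ A, χ v

lemma charSum_union [Finite V] (χ : AddChar V ℂ) {A B : Set V} (h : Disjoint A B) :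
    charSum χ (A ∪ B) = charSum χ A + charSum χ B :=
  finsum_mem_union h A.toFinite B.toFinite

lemma charSum_sdiff_zero [Finite V] (χ : AddChar V ℂ) {A : Set V} (hA : (0 : V) ∈ A) :
    charSum χ (A \ {0}) = charSum χ A - 1 := by
  have h := charSum_union χ (A := {0}) (B := A \ {0}) Set.disjoint_sdiff_right
  have hzero : charSum χ {0} = 1 := finsum_mem_singleton.trans χ.map_zero_eq_one
  rw [Set.union_sdiff_cancel (Set.singleton_subset_iff.2 hA), hzero] at h
  exact eq_sub_of_add_eq' h.symm

lemma charSum_zero [Finite V] (A : Set V) : charSum (0 : AddChar V ℂ) A = A.ncard := by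
  classical
  have := Fintype.ofFinite V
  simp [charSum, finsum_mem_eq_toFinset_sum, Set.ncard_eq_toFinset_card A]

lemma fourierSum_signFn [Fintype V] (A : Set V) (χ : AddChar V ℂ) :
    fourierSum (signFn A) χ = ∑ v, χ v - 2 * charSum χ A := by
  classical
  have h : ∀ v, signFn A v * χ v = χ v - 2 * if v ∈ A then χ v else 0 := fun v => by
    unfold signFn; split_ifs <;> ring
  simp [fourierSum, charSum, h, finsum_mem_eq_toFinset_sum, Finset.mul_sum, Finset.sum_ite,
    Set.filter_mem_univ_eq_toFinset]

lemma fourierSum_signFn_compl [Fintype V] (A : Set V) (χ : AddChar V ℂ) :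
    fourierSum (signFn Aᶜ) χ = -fourierSum (signFn A) χ := by
  have h : ∀ v, signFn Aᶜ v = -signFn A v := fun v => by
    by_cases hv : v ∈ A <;> simp [signFn, hv]
  simp [fourierSum, h]

lemma fourierSum_signFn_zero [Fintype V] {m : ℕ} (hV : Fintype.card V = m ^ 2) {A : Set V}
    (hA : 2 * A.ncard + m = m ^ 2) : fourierSum (signFn A) 0 = m := by
  have hA' : (2 * A.ncard + m : ℂ) = m ^ 2 := mod_cast hA
  rw [fourierSum_signFn, charSum_zero]
  simp only [AddChar.zero_apply, Finset.sum_const, Finset.card_univ, hV, nsmul_one]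
  push_cast
  linear_combination -hA'

variable {H : Type*} [AddCommGroup H] [Fintype H] [DecidableEq H]

lemma sum_mul_eq_ite_of_sum_abs_eq_one {a : H → ℤ} (ha : ∑ k, |a k| = 1) (h : H) :
    ∑ k, a (k + h) * a k = if h = 0 then 1 else 0 := by
  obtain ⟨k₀, -, hk₀⟩ : ∃ k ∈ Finset.univ, |a k| ≠ 0 :=
    Finset.exists_ne_zero_of_sum_ne_zero (ha ▸ one_ne_zero)
  have hsplit := Fintype.sum_eq_add_sum_compl k₀ fun k => |a k|
  have hrest : 0 ≤ ∑ k ∈ {k₀}ᶜ, |a k| := Finset.sum_nonneg fun k _ => abs_nonneg (a k)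
  have habs := abs_nonneg (a k₀)
  have hone : |a k₀| = 1 := by lia
  have hzero : ∀ k ≠ k₀, a k = 0 := fun k hk => abs_eq_zero.1 <|
    (Finset.sum_eq_zero_iff_of_nonneg fun k _ => abs_nonneg (a k)).1
      (show ∑ k ∈ {k₀}ᶜ, |a k| = 0 by lia) k (by simpa using hk)
  rw [Fintype.sum_eq_single k₀ fun k hk => by rw [hzero k hk, mul_zero]]
  split_ifs with hh
  · rw [hh, add_zero, ← abs_mul_abs_self, hone, one_mul]
  · rw [hzero _ (by simpa using hh), zero_mul]

lemma sum_mul_eq_ite_of_card_eq_four (hH : Fintype.card H = 4) (h : H) :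
    ∑ k : H, (if k + h = 0 then -1 else 1) * (if k = 0 then -1 else 1) =
      if h = 0 then (4 : ℤ) else 0 := by
  have hterm : ∀ k : H, (if k + h = 0 then -1 else 1) * (if k = 0 then -1 else 1) =
      (1 + (if k = -h then -2 else 0) + (if k = 0 then -2 else 0) +
        if k = 0 then if h = 0 then 4 else 0 else 0 : ℤ) := fun k => by
    simp only [← eq_neg_iff_add_eq_zero]
    by_cases hk : k = 0 <;> by_cases hh : h = 0 <;> by_cases hkh : k = -h <;> simp_all
  simp [hterm, Finset.sum_add_distrib, hH]

end Blocks

section Criterion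

open ComplexConjugate

variable {H V : Type} [AddCommGroup H] [Fintype H] [AddCommGroup V] {m : ℕ}

lemma isMHDS_of_fourierSum [Fintype V] [DecidableEq H] (hH : Fintype.card H = 4)
    (hV : Fintype.card V = m ^ 2) {D : H → Set V}
    (hsum : ∑ k, fourierSum (signFn (D k)) 0 = 2 * m)
    (hperfect : ∀ χ, ∃ c : H → ℤ, (∀ k, fourierSum (signFn (D k)) χ = m * c k) ∧
      ∀ h, ∑ k, c (k + h) * c k = if h = 0 then 4 else 0) :
    IsMHDS m {z : H × V | z.2 ∈ D z.1} := by
  classical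
  have hconj : ∀ k v, conj (signFn (D k) v) = signFn (D k) v := fun k v => by
    unfold signFn; split_ifs <;> simp
  have hfourier (χ : AddChar V ℂ) (h : H) :
      ∑ k, fourierSum (signFn (D (k + h))) χ * conj (fourierSum (signFn (D k)) χ) =
        if h = 0 then (4 * m ^ 2 : ℂ) else 0 := by
    obtain ⟨c, hc, hcorr⟩ := hperfect χ
    calc ∑ k, fourierSum (signFn (D (k + h))) χ * conj (fourierSum (signFn (D k)) χ)
      _ = m ^ 2 * (∑ k, c (k + h) * c k : ℤ) := by
        simp only [hc, map_mul, Complex.conj_natCast, map_intCast]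
        push_cast
        rw [Finset.mul_sum]
        exact Finset.sum_congr rfl fun k _ => by ring
      _ = if h = 0 then (4 * m ^ 2 : ℂ) else 0 := by
        rw [hcorr]; split_ifs <;> simp [mul_comm]
  refine isMHDS_of_sum_signFn ?_ ?_ fun z hz => ?_
  · rw [Fintype.card_prod, hH, hV]
  · simpa [fourierSum, Fintype.sum_prod_type, signFn] using hsum
  · have hcorr := sum_mul_conj_prod_eq_ite (fun k => signFn (D k)) _ hfourier z
    simp only [hconj, if_neg hz] at hcorr
    exact hcorr

/-- Complementing the block at `0` turns the trivial Fourier coefficients `m` into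
`(-m, m, m, m)`, which is perfect over either group of order four. -/
theorem exists_isMHDS_of_charSum [Finite V] (hH : Fintype.card H = 4)
    (hV : Nat.card V = m ^ 2) (B : H → Set V) (hcard : ∀ k, 2 * (B k).ncard + m = m ^ 2)
    (hchar : ∀ χ : AddChar V ℂ, χ ≠ 0 →
      ∃ a : H → ℤ, ∑ k, |a k| = 1 ∧ ∀ k, charSum χ (B k) = m * a k) :
    ∃ D : Set (H × V), IsMHDS m D := by
  classical
  have := Fintype.ofFinite V
  rw [Nat.card_eq_fintype_card] at hV
  let ε : H → ℤ := fun k => if k = 0 then -1 else 1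
  let D : H → Set V := fun k => if k = 0 then (B k)ᶜ else B k
  have hD : ∀ k χ, fourierSum (signFn (D k)) χ = ε k * fourierSum (signFn (B k)) χ := fun k χ => by
    by_cases hk : k = 0 <;> simp [D, ε, hk, fourierSum_signFn_compl]
  have htrivial : ∀ k, fourierSum (signFn (D k)) 0 = m * ε k := fun k => by
    rw [hD, fourierSum_signFn_zero hV (hcard k), mul_comm]
  refine ⟨{z | z.2 ∈ D z.1}, isMHDS_of_fourierSum hH hV ?_ fun χ => ?_⟩
  · have hε : ∑ k, ε k = 2 := by
      have hterm : ∀ k, ε k = 1 - if k = 0 then 2 else 0 := fun k => by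
        by_cases hk : k = 0 <;> simp [ε, hk]
      simp [hterm, hH]
    simp only [htrivial, ← Finset.mul_sum]
    rw [← Int.cast_sum, hε]
    ring
  · by_cases hχ : χ = 0
    · exact ⟨ε, fun k => hχ ▸ htrivial k, sum_mul_eq_ite_of_card_eq_four hH⟩
    · obtain ⟨a, ha, hBa⟩ := hchar χ hχ
      have hεa : ∑ k, |ε k * a k| = 1 := by
        rw [← ha]
        exact Finset.sum_congr rfl fun k _ => by by_cases hk : k = 0 <;> simp [ε, hk]
      refine ⟨fun k => -2 * (ε k * a k), fun k => ?_, fun h => ?_⟩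
      · rw [hD, fourierSum_signFn, hBa, AddChar.sum_eq_zero_iff_ne_zero.2 hχ]
        push_cast
        ring
      · have hfactor : ∀ k, -2 * (ε (k + h) * a (k + h)) * (-2 * (ε k * a k)) =
            4 * (ε (k + h) * a (k + h) * (ε k * a k)) := fun k => by ring
        simp only [hfactor, ← Finset.mul_sum]
        rw [sum_mul_eq_ite_of_sum_abs_eq_one hεa, mul_ite, mul_one, mul_zero]

end Criterion

section CharacterKernel

variable (K : Type*) {V : Type*} [Field K] [AddCommGroup V] [Module K V]

/-- The largest `K`-subspace on which the additive character `χ` is trivial. For `χ ≠ 0` and `K`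
finite it is the hyperplane of the projective space attached to `χ`. -/
def kernelSubspace (χ : AddChar V ℂ) : Submodule K V where
  carrier := {v | ∀ c : K, χ (c • v) = 1}
  zero_mem' := by simp
  add_mem' hu hv c := by rw [smul_add, AddChar.map_add_eq_mul, hu, hv, one_mul]
  smul_mem' d v hv c := by rw [smul_smul]; exact hv _

variable {K}

lemma le_kernelSubspace_iff {χ : AddChar V ℂ} {U : Submodule K V} :
    U ≤ kernelSubspace K χ ↔ ∀ v ∈ U, χ v = 1 :=
  ⟨fun h v hv => by simpa using h hv 1, fun h v hv c => h _ (U.smul_mem c hv)⟩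

lemma kernelSubspace_zero : kernelSubspace K (0 : AddChar V ℂ) = ⊤ :=
  top_le_iff.1 <| le_kernelSubspace_iff.2 fun _ _ => rfl

lemma kernelSubspace_ne_top {χ : AddChar V ℂ} (hχ : χ ≠ 0) : kernelSubspace K χ ≠ ⊤ := by
  contrapose! hχ
  ext v
  exact le_kernelSubspace_iff.1 hχ.ge v Submodule.mem_top

/-- The quotient by the kernel embeds into the character group of `K`, which has only `|K|`
elements. -/
lemma finrank_quotient_kernelSubspace_le_one [Finite K] [Finite V] (χ : AddChar V ℂ) :
    Module.finrank K (V ⧸ kernelSubspace K χ) ≤ 1 := by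
  let φ : V →+ AddChar K ℂ :=
    { toFun v := χ.compAddMonoidHom ((smulAddHom K V).flip v)
      map_zero' := by ext c; simp
      map_add' u v := by ext c; simp [AddChar.map_add_eq_mul] }
  have hker : φ.ker = (kernelSubspace K χ).toAddSubgroup := by
    ext v
    exact DFunLike.ext_iff
  have := Fintype.ofFinite K
  have hle : Nat.card K ^ Module.finrank K (V ⧸ kernelSubspace K χ) ≤ Nat.card K ^ 1 := calc
    _ = Nat.card (V ⧸ φ.ker) := by
      rw [← Module.natCard_eq_pow_finrank, hker]
      rfl
    _ ≤ Nat.card (AddChar K ℂ) :=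
      Nat.card_le_card_of_injective _ (QuotientAddGroup.kerLift_injective φ)
    _ = Nat.card K ^ 1 := by
      rw [Nat.card_eq_fintype_card, AddChar.card_eq, Nat.card_eq_fintype_card, pow_one]
  exact (Nat.pow_le_pow_iff_right Finite.one_lt_card).1 hle

lemma finrank_kernelSubspace_add_one [Finite K] [Finite V] {χ : AddChar V ℂ} (hχ : χ ≠ 0) :
    Module.finrank K (kernelSubspace K χ) + 1 = Module.finrank K V := by
  have hadd := (kernelSubspace K χ).finrank_quotient_add_finrank
  have hlt := Submodule.finrank_lt (kernelSubspace_ne_top (K := K) hχ)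
  have hle := finrank_quotient_kernelSubspace_le_one (K := K) χ
  lia

open Classical in
lemma charSum_submodule [Finite V] (χ : AddChar V ℂ) (U : Submodule K V) :
    charSum χ (U : Set V) =
      if U ≤ kernelSubspace K χ then (Nat.card K : ℂ) ^ Module.finrank K U else 0 := by
  have := Fintype.ofFinite U
  have hres : charSum χ (U : Set V) = ∑ u, χ.compAddMonoidHom U.subtype.toAddMonoidHom u := by
    rw [charSum, ← finsum_set_coe_eq_finsum_mem, finsum_eq_sum_of_fintype]
    rfl
  have hzero : χ.compAddMonoidHom U.subtype.toAddMonoidHom = 0 ↔ U ≤ kernelSubspace K χ := by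
    rw [le_kernelSubspace_iff, DFunLike.ext_iff]
    exact Subtype.forall
  rw [hres, AddChar.sum_eq_ite]
  simp only [hzero, ← Nat.card_eq_fintype_card, Module.natCard_eq_pow_finrank (K := K) (V := U),
    Nat.cast_pow]

end CharacterKernel

section PartialSpreads

variable {K V : Type*} [Field K] [AddCommGroup V] [Module K V]

/-- A set of `d`-dimensional subspaces which pairwise meet trivially. Sets of points (`d = 1`) and
sets of pairwise skew lines (`d = 2`) are both of this kind. -/
structure IsPartialSpread (d : ℕ) (𝒮 : Set (Submodule K V)) : Prop where
  finrank_eq : ∀ U ∈ 𝒮, Module.finrank K U = d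
  pairwiseDisjoint : 𝒮.PairwiseDisjoint id

/-- The nonzero vectors covered by a set of subspaces. -/
def nonzeroVectors (𝒮 : Set (Submodule K V)) : Set V := ⋃ U ∈ 𝒮, (U : Set V) \ {0}

/-- The points, as one-dimensional subspaces, covered by a set of subspaces. -/
def pointsOn (𝒮 : Set (Submodule K V)) : Set (Submodule K V) :=
  {P | Module.finrank K P = 1 ∧ ∃ U ∈ 𝒮, P ≤ U}

/-- The number of members of `𝒮` lying in the hyperplane attached to `χ`. -/
def kernelCount (χ : AddChar V ℂ) (𝒮 : Set (Submodule K V)) : ℕ :=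
  {U ∈ 𝒮 | U ≤ kernelSubspace K χ}.ncard

lemma kernelCount_zero (𝒮 : Set (Submodule K V)) : kernelCount 0 𝒮 = 𝒮.ncard := by
  simp [kernelCount, kernelSubspace_zero]

lemma kernelCount_mono [Finite V] (χ : AddChar V ℂ) {𝒮 𝒯 : Set (Submodule K V)} (h : 𝒮 ⊆ 𝒯) :
    kernelCount χ 𝒮 ≤ kernelCount χ 𝒯 :=
  Set.ncard_le_ncard fun _ hU => ⟨h hU.1, hU.2⟩

lemma kernelCount_union [Finite V] (χ : AddChar V ℂ) {𝒮 𝒯 : Set (Submodule K V)}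
    (h : Disjoint 𝒮 𝒯) : kernelCount χ (𝒮 ∪ 𝒯) = kernelCount χ 𝒮 + kernelCount χ 𝒯 := by
  rw [kernelCount, Set.ofPred_and, Set.ofPred_mem_eq, Set.union_inter_distrib_right]
  exact Set.ncard_union_eq (h.mono Set.inter_subset_left Set.inter_subset_left)

lemma mem_nonzeroVectors {𝒮 : Set (Submodule K V)} {v : V} :
    v ∈ nonzeroVectors 𝒮 ↔ v ≠ 0 ∧ ∃ U ∈ 𝒮, v ∈ U := by
  simp only [nonzeroVectors, Set.mem_iUnion₂, Set.mem_sdiff, SetLike.mem_coe,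
    Set.mem_singleton_iff]
  tauto

lemma nonzeroVectors_mono {𝒮 𝒯 : Set (Submodule K V)} (h : 𝒮 ⊆ 𝒯) :
    nonzeroVectors 𝒮 ⊆ nonzeroVectors 𝒯 :=
  Set.biUnion_subset_biUnion_left h

lemma nonzeroVectors_union (𝒮 𝒯 : Set (Submodule K V)) :
    nonzeroVectors (𝒮 ∪ 𝒯) = nonzeroVectors 𝒮 ∪ nonzeroVectors 𝒯 :=
  Set.biUnion_union ..

lemma nonzeroVectors_pointsOn (𝒮 : Set (Submodule K V)) :
    nonzeroVectors (pointsOn 𝒮) = nonzeroVectors 𝒮 := by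
  ext v
  simp only [mem_nonzeroVectors, pointsOn, Set.mem_ofPred_eq]
  refine and_congr_right fun hv => ⟨?_, ?_⟩
  · rintro ⟨P, ⟨-, U, hU, hPU⟩, hvP⟩
    exact ⟨U, hU, hPU hvP⟩
  · rintro ⟨U, hU, hvU⟩
    exact ⟨K ∙ v, ⟨finrank_span_singleton hv, U, hU, by simpa using hvU⟩,
      Submodule.mem_span_singleton_self v⟩

lemma isPartialSpread_one {𝒮 : Set (Submodule K V)} (h : ∀ P ∈ 𝒮, Module.finrank K P = 1) :
    IsPartialSpread 1 𝒮 := by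
  refine ⟨h, fun P hP P' hP' hne => ?_⟩
  exact (Submodule.isAtom_iff_finrank_eq_one.2 (h P hP)).disjoint_of_ne
    (Submodule.isAtom_iff_finrank_eq_one.2 (h P' hP')) hne

namespace IsPartialSpread

variable {d : ℕ} {𝒮 𝒯 : Set (Submodule K V)}

lemma mono (h : IsPartialSpread d 𝒯) (h𝒮 : 𝒮 ⊆ 𝒯) : IsPartialSpread d 𝒮 :=
  ⟨fun U hU => h.finrank_eq U (h𝒮 hU), h.pairwiseDisjoint.subset h𝒮⟩

lemma disjoint_nonzeroVectors (h : IsPartialSpread d (𝒮 ∪ 𝒯)) (hdisj : Disjoint 𝒮 𝒯) :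
    Disjoint (nonzeroVectors 𝒮) (nonzeroVectors 𝒯) := by
  refine Set.disjoint_left.2 fun v hv𝒮 hv𝒯 => ?_
  obtain ⟨hv, U, hU, hvU⟩ := mem_nonzeroVectors.1 hv𝒮
  obtain ⟨-, U', hU', hvU'⟩ := mem_nonzeroVectors.1 hv𝒯
  exact hv <| Submodule.disjoint_def.1
    (h.pairwiseDisjoint (.inl hU) (.inr hU') (hdisj.ne_of_mem hU hU')) v hvU hvU'

lemma charSum_nonzeroVectors [Finite V] (h : IsPartialSpread d 𝒮) (χ : AddChar V ℂ) :
    charSum χ (nonzeroVectors 𝒮) =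
      Nat.card K ^ d * kernelCount χ 𝒮 - 𝒮.ncard := by
  classical
  have hdisj : 𝒮.PairwiseDisjoint fun U => (U : Set V) \ {0} := fun U hU U' hU' hne => by
    refine Set.disjoint_left.2 fun v hv hv' => hv.2 ?_
    exact Submodule.disjoint_def.1 (h.pairwiseDisjoint hU hU' hne) v hv.1 hv'.1
  obtain ⟨T, rfl⟩ := 𝒮.toFinite.exists_finset_coe
  have hfilter : {U ∈ (T : Set (Submodule K V)) | U ≤ kernelSubspace K χ} =
      (T.filter (· ≤ kernelSubspace K χ) : Finset (Submodule K V)) := by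
    ext; simp
  calc charSum χ (nonzeroVectors (T : Set (Submodule K V)))
    _ = ∑ U ∈ T, (charSum χ (U : Set V) - 1) := by
      simp only [← charSum_sdiff_zero χ (zero_mem (_ : Submodule K V))]
      rw [← finsum_mem_coe_finset]
      exact finsum_mem_biUnion hdisj T.finite_toSet fun _ _ => Set.toFinite _
    _ = ∑ U ∈ T, ((if U ≤ kernelSubspace K χ then (Nat.card K : ℂ) ^ d else 0) - 1) :=
      Finset.sum_congr rfl fun U hU => by rw [charSum_submodule, h.finrank_eq U hU]
    _ = _ := by
      rw [kernelCount, hfilter, Set.ncard_coe_finset, Set.ncard_coe_finset, Finset.sum_sub_distrib,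
        ← Finset.sum_filter]
      simp [mul_comm]

lemma charSum_nonzeroVectors_union [Finite V] (h : IsPartialSpread d 𝒮)
    (hdisj : Disjoint (nonzeroVectors 𝒯) (nonzeroVectors 𝒮)) (χ : AddChar V ℂ) :
    charSum χ (nonzeroVectors (𝒯 ∪ 𝒮)) =
      charSum χ (nonzeroVectors 𝒯) + (Nat.card K ^ d * kernelCount χ 𝒮 - 𝒮.ncard) := by
  rw [nonzeroVectors_union, charSum_union χ hdisj, h.charSum_nonzeroVectors]

lemma ncard_nonzeroVectors [Finite V] (h : IsPartialSpread d 𝒮) :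
    ((nonzeroVectors 𝒮).ncard : ℂ) = (Nat.card K ^ d - 1) * 𝒮.ncard := by
  have hsum := h.charSum_nonzeroVectors 0
  rw [charSum_zero, kernelCount_zero] at hsum
  linear_combination hsum

/-- By counting, a partial spread of this size covers every nonzero vector, so its character sum
is `-1`. -/
lemma kernelCount_eq_one [Finite K] [Finite V] (h : IsPartialSpread d 𝒮)
    (hV : Module.finrank K V = 2 * d) (h𝒮 : 𝒮.ncard = Nat.card K ^ d + 1) {χ : AddChar V ℂ}
    (hχ : χ ≠ 0) : kernelCount χ 𝒮 = 1 := by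
  have hcover : nonzeroVectors 𝒮 = {0}ᶜ := by
    refine Set.eq_of_subset_of_ncard_le (fun v hv => (mem_nonzeroVectors.1 hv).1) ?_
    have hcard := h.ncard_nonzeroVectors
    rw [Set.ncard_compl, Set.ncard_singleton, Module.natCard_eq_pow_finrank (K := K), hV]
    have : (((nonzeroVectors 𝒮).ncard : ℂ) + 1) = (Nat.card K) ^ (2 * d) := by
      rw [hcard, h𝒮]; push_cast; ring
    norm_cast at this
    lia
  have hq : (Nat.card K ^ d : ℂ) ≠ 0 := pow_ne_zero _ (Nat.cast_ne_zero.2 Nat.card_pos.ne')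
  have hneg : charSum χ ({0}ᶜ : Set V) = -1 := by
    rw [Set.compl_eq_univ_sdiff, charSum_sdiff_zero χ (Set.mem_univ 0),
      ← Submodule.top_coe (R := K), charSum_submodule,
      if_neg fun h => kernelSubspace_ne_top hχ (top_le_iff.1 h), zero_sub]
  have hsum := h.charSum_nonzeroVectors χ
  rw [hcover, hneg, h𝒮] at hsum
  have hone : (kernelCount χ 𝒮 : ℂ) = 1 := by
    refine mul_left_cancel₀ hq ?_
    push_cast at hsum
    linear_combination -hsum
  exact_mod_cast hone

end IsPartialSpread

end PartialSpreads

namespace IsProjTypeQ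

variable {K V : Type} [Field K] [AddCommGroup V] [Module K V] {q : ℕ} {S : Set (Submodule K V)}

lemma isPartialSpread (h : IsProjTypeQ q K V S) : IsPartialSpread 1 S :=
  isPartialSpread_one h.1

lemma four_mul_ncard (h : IsProjTypeQ q K V S) (hq : Odd q) (hq1 : 1 < q) :
    4 * S.ncard = (q + 1) * (q ^ 2 + 1) := by
  have hfactor : q ^ 4 - 1 = (q + 1) * (q ^ 2 + 1) * (q - 1) := by
    zify [hq1.le, Nat.one_le_pow 4 q (by lia)]
    ring
  have hdvd : 2 * 2 ∣ (q + 1) * (q ^ 2 + 1) := mul_dvd_mul hq.add_one.two_dvd hq.pow.add_one.two_dvd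
  rw [h.2.1, hfactor, Nat.mul_div_mul_right _ _ (by lia), Nat.mul_div_cancel' hdvd]

lemma exists_four_mul_ncard_le (h : IsProjTypeQ q K V S) (hq : Odd q) {W : Submodule K V}
    (hW : Module.finrank K W = 3) :
    ∃ e : ℕ, 4 * {P ∈ S | P ≤ W}.ncard + 4 * q * e = (q + 1) ^ 2 := by
  obtain ⟨r, rfl⟩ := hq
  rcases h.2.2 W hW with hr | hr
  · have hsq : (2 * r + 1 - 1) ^ 2 = 4 * r ^ 2 := by rw [Nat.add_sub_cancel]; ring
    exact ⟨1, by rw [hr, hsq, Nat.mul_div_cancel_left _ four_pos]; ring⟩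
  · have hsq : (2 * r + 1 + 1) ^ 2 = 4 * (r + 1) ^ 2 := by ring
    exact ⟨0, by rw [hr, hsq, Nat.mul_div_cancel_left _ four_pos]; ring⟩

variable [Finite K] [Finite V]

lemma four_mul_ncard_nonzeroVectors (h : IsProjTypeQ (Nat.card K) K V S) (hq : Odd (Nat.card K)) :
    (4 * (nonzeroVectors S).ncard : ℂ) = Nat.card K ^ 4 - 1 := by
  have hcard : (4 * S.ncard : ℂ) = (Nat.card K + 1) * (Nat.card K ^ 2 + 1) :=
    mod_cast h.four_mul_ncard hq Finite.one_lt_card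
  rw [h.isPartialSpread.ncard_nonzeroVectors]
  linear_combination (Nat.card K - 1 : ℂ) * hcard

lemma exists_four_mul_charSum (h : IsProjTypeQ (Nat.card K) K V S) (hq : Odd (Nat.card K))
    (hV : Module.finrank K V = 4) {χ : AddChar V ℂ} (hχ : χ ≠ 0) :
    ∃ e : ℕ, 4 * charSum χ (nonzeroVectors S) = Nat.card K ^ 2 - 1 - 4 * Nat.card K ^ 2 * e := by
  have hW : Module.finrank K (kernelSubspace K χ) = 3 := by
    have := finrank_kernelSubspace_add_one (K := K) hχ
    lia
  obtain ⟨e, hcount⟩ := h.exists_four_mul_ncard_le hq hW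
  have hcard : (4 * S.ncard : ℂ) = (Nat.card K + 1) * (Nat.card K ^ 2 + 1) :=
    mod_cast h.four_mul_ncard hq Finite.one_lt_card
  have hcount' : (4 * kernelCount χ S + 4 * Nat.card K * e : ℂ) = (Nat.card K + 1) ^ 2 :=
    mod_cast hcount
  refine ⟨e, ?_⟩
  rw [h.isPartialSpread.charSum_nonzeroVectors]
  linear_combination (Nat.card K : ℂ) * hcount' - hcard

lemma two_mul_ncard_nonzeroVectors_union (h : IsProjTypeQ (Nat.card K) K V S)
    (hq : Odd (Nat.card K)) {𝓙 : Set (Submodule K V)} (h𝓙 : IsPartialSpread 2 𝓙)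
    (hcard : 4 * 𝓙.ncard + 1 = Nat.card K ^ 2)
    (hdisj : Disjoint (nonzeroVectors S) (nonzeroVectors 𝓙)) :
    2 * (nonzeroVectors (S ∪ 𝓙)).ncard + Nat.card K ^ 2 = (Nat.card K ^ 2) ^ 2 := by
  have hS := h.four_mul_ncard_nonzeroVectors hq
  have h𝓙card := h𝓙.ncard_nonzeroVectors
  have hcard' : (4 * 𝓙.ncard + 1 : ℂ) = Nat.card K ^ 2 := mod_cast hcard
  have hℂ : (4 * (nonzeroVectors (S ∪ 𝓙)).ncard + 2 * Nat.card K ^ 2 : ℂ) =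
      2 * (Nat.card K ^ 2) ^ 2 := by
    rw [nonzeroVectors_union, Set.ncard_union_eq hdisj]
    push_cast
    linear_combination hS + 4 * h𝓙card + (Nat.card K ^ 2 - 1 : ℂ) * hcard'
  norm_cast at hℂ
  lia

end IsProjTypeQ

section SplitSpreads

variable {K V : Type*} [Field K] [AddCommGroup V] [Module K V]

/-- A spread of lines of `PG(3,q)`, `q` odd, partitioned into two halves of `(q² + 1) / 2` lines.
That every point is covered follows from the number of lines. -/
structure IsSplitSpread (𝓐 𝓑 : Set (Submodule K V)) : Prop where
  isPartialSpread : IsPartialSpread 2 (𝓐 ∪ 𝓑)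
  disjoint : Disjoint 𝓐 𝓑
  two_mul_ncard_left : 2 * 𝓐.ncard = Nat.card K ^ 2 + 1
  two_mul_ncard_right : 2 * 𝓑.ncard = Nat.card K ^ 2 + 1

namespace IsSplitSpread

variable {𝓐 𝓑 𝓙 P Q : Set (Submodule K V)}

lemma symm (h : IsSplitSpread 𝓐 𝓑) : IsSplitSpread 𝓑 𝓐 :=
  ⟨Set.union_comm 𝓐 𝓑 ▸ h.isPartialSpread, h.disjoint.symm, h.two_mul_ncard_right,
    h.two_mul_ncard_left⟩

lemma exists_subset_right (h : IsSplitSpread 𝓐 𝓑) (hq : Odd (Nat.card K)) :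
    ∃ 𝓙 ⊆ 𝓑, 4 * 𝓙.ncard + 1 = Nat.card K ^ 2 := by
  have h4 : Nat.card K ^ 2 % 4 = 1 := by
    obtain ⟨r, hr⟩ := hq
    rw [hr, show (2 * r + 1) ^ 2 = 4 * (r ^ 2 + r) + 1 by ring]
    lia
  have hcard := h.two_mul_ncard_right
  obtain ⟨𝓙, h𝓙, hj⟩ := Set.exists_subset_card_eq (s := 𝓑) (n := Nat.card K ^ 2 / 4) (by lia)
  exact ⟨𝓙, h𝓙, by lia⟩

lemma disjoint_nonzeroVectors (h : IsSplitSpread 𝓐 𝓑) (hP : P ⊆ pointsOn 𝓐) (h𝓙 : 𝓙 ⊆ 𝓑) :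
    Disjoint (nonzeroVectors P) (nonzeroVectors 𝓙) :=
  (h.isPartialSpread.disjoint_nonzeroVectors h.disjoint).mono
    ((nonzeroVectors_mono hP).trans (nonzeroVectors_pointsOn 𝓐).subset) (nonzeroVectors_mono h𝓙)

variable [Finite V]

lemma two_mul_charSum_left (h : IsSplitSpread 𝓐 𝓑) (χ : AddChar V ℂ) :
    2 * charSum χ (nonzeroVectors 𝓐) =
      2 * Nat.card K ^ 2 * kernelCount χ 𝓐 - (Nat.card K ^ 2 + 1) := by
  have hA : (2 * 𝓐.ncard : ℂ) = Nat.card K ^ 2 + 1 := mod_cast h.two_mul_ncard_left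
  rw [(h.isPartialSpread.mono Set.subset_union_left).charSum_nonzeroVectors]
  linear_combination -hA

lemma kernelCount_add_kernelCount [Finite K] (h : IsSplitSpread 𝓐 𝓑)
    (hV : Module.finrank K V = 4) {χ : AddChar V ℂ} (hχ : χ ≠ 0) :
    kernelCount χ 𝓐 + kernelCount χ 𝓑 = 1 := by
  have hA := h.two_mul_ncard_left
  have hB := h.two_mul_ncard_right
  rw [← kernelCount_union χ h.disjoint]
  refine h.isPartialSpread.kernelCount_eq_one hV ?_ hχ
  rw [Set.ncard_union_eq h.disjoint]
  lia

end IsSplitSpread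

end SplitSpreads

section TypeQPartitions

lemma abs_sub_add_abs_sub_eq {e e' t n : ℕ} (hadd : e + e' = n) (hn : n ≤ 1) (ht : t ≤ n) :
    |(t - e : ℤ)| + |(t - e' : ℤ)| = n := by
  simp only [abs_eq_max_neg]
  lia

namespace IsSplitSpread

variable {K V : Type} [Field K] [AddCommGroup V] [Module K V] [Finite K] [Finite V]
  {𝓐 𝓑 𝓙 P Q : Set (Submodule K V)}

/-- The hyperplane of `χ` either contains a line of `𝓐` and none of `𝓑`, or a line of `𝓑` and none
of `𝓐`; in the latter case it meets exactly one of `P` and `Q` in the smaller number of points. -/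
lemma exists_four_mul_charSum (h : IsSplitSpread 𝓐 𝓑) (hq : Odd (Nat.card K))
    (hV : Module.finrank K V = 4) (hP : IsProjTypeQ (Nat.card K) K V P)
    (hQ : IsProjTypeQ (Nat.card K) K V Q) (hdisj : Disjoint P Q) (hPQ : P ∪ Q = pointsOn 𝓐)
    {χ : AddChar V ℂ} (hχ : χ ≠ 0) :
    ∃ e e' : ℕ, e + e' = kernelCount χ 𝓑 ∧
      4 * charSum χ (nonzeroVectors P) = Nat.card K ^ 2 - 1 - 4 * Nat.card K ^ 2 * e ∧
      4 * charSum χ (nonzeroVectors Q) = Nat.card K ^ 2 - 1 - 4 * Nat.card K ^ 2 * e' := by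
  obtain ⟨e, hPχ⟩ := hP.exists_four_mul_charSum hq hV hχ
  obtain ⟨e', hQχ⟩ := hQ.exists_four_mul_charSum hq hV hχ
  refine ⟨e, e', ?_, hPχ, hQχ⟩
  have hPQ1 : IsPartialSpread 1 (P ∪ Q) := isPartialSpread_one (hPQ ▸ fun _ hR => hR.1)
  have hsum : charSum χ (nonzeroVectors P) + charSum χ (nonzeroVectors Q) =
      charSum χ (nonzeroVectors 𝓐) := by
    rw [← nonzeroVectors_pointsOn 𝓐, ← hPQ, nonzeroVectors_union,
      charSum_union χ (hPQ1.disjoint_nonzeroVectors hdisj)]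
  have hAB : (kernelCount χ 𝓐 + kernelCount χ 𝓑 : ℂ) = 1 :=
    mod_cast h.kernelCount_add_kernelCount hV hχ
  have hq0 : (Nat.card K ^ 2 : ℂ) ≠ 0 := pow_ne_zero _ (Nat.cast_ne_zero.2 Nat.card_pos.ne')
  have hcount : (e + e' : ℂ) = kernelCount χ 𝓑 := by
    refine mul_left_cancel₀ hq0 ?_
    linear_combination -hsum + hPχ / 4 + hQχ / 4 - h.two_mul_charSum_left χ / 2 -
      (Nat.card K ^ 2 : ℂ) * hAB
  exact_mod_cast hcount

lemma exists_charSum_eq (h : IsSplitSpread 𝓐 𝓑) (hq : Odd (Nat.card K))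
    (hV : Module.finrank K V = 4) (hP : IsProjTypeQ (Nat.card K) K V P)
    (hQ : IsProjTypeQ (Nat.card K) K V Q) (hdisj : Disjoint P Q) (hPQ : P ∪ Q = pointsOn 𝓐)
    (h𝓙 : 𝓙 ⊆ 𝓑) (hcard : 4 * 𝓙.ncard + 1 = Nat.card K ^ 2) {χ : AddChar V ℂ} (hχ : χ ≠ 0) :
    ∃ a b : ℤ, |a| + |b| = kernelCount χ 𝓑 ∧
      charSum χ (nonzeroVectors (P ∪ 𝓙)) = Nat.card K ^ 2 * a ∧
      charSum χ (nonzeroVectors (Q ∪ 𝓙)) = Nat.card K ^ 2 * b := by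
  obtain ⟨e, e', hcount, hPχ, hQχ⟩ := h.exists_four_mul_charSum hq hV hP hQ hdisj hPQ hχ
  have hcard' : (4 * 𝓙.ncard + 1 : ℂ) = Nat.card K ^ 2 := mod_cast hcard
  have hB : kernelCount χ 𝓑 ≤ 1 := by
    have := h.kernelCount_add_kernelCount hV hχ
    lia
  have h𝓙2 : IsPartialSpread 2 𝓙 := h.isPartialSpread.mono (h𝓙.trans Set.subset_union_right)
  have hP𝓙 := h.disjoint_nonzeroVectors (hPQ ▸ Set.subset_union_left) h𝓙
  have hQ𝓙 := h.disjoint_nonzeroVectors (hPQ ▸ Set.subset_union_right) h𝓙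
  refine ⟨kernelCount χ 𝓙 - e, kernelCount χ 𝓙 - e',
    abs_sub_add_abs_sub_eq hcount hB (kernelCount_mono χ h𝓙), ?_, ?_⟩
  · rw [h𝓙2.charSum_nonzeroVectors_union hP𝓙]
    push_cast
    linear_combination hPχ / 4 - hcard' / 4
  · rw [h𝓙2.charSum_nonzeroVectors_union hQ𝓙]
    push_cast
    linear_combination hQχ / 4 - hcard' / 4

lemma exists_blocks (h : IsSplitSpread 𝓐 𝓑) (hq : Odd (Nat.card K))
    (hV : Module.finrank K V = 4) {S : Fin 4 → Set (Submodule K V)}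
    (hQ : ∀ k, IsProjTypeQ (Nat.card K) K V (S k)) (hdisj₀₂ : Disjoint (S 0) (S 2))
    (hdisj₁₃ : Disjoint (S 1) (S 3)) (h₀₂ : S 0 ∪ S 2 = pointsOn 𝓐)
    (h₁₃ : S 1 ∪ S 3 = pointsOn 𝓑) :
    ∃ B : Fin 4 → Set V,
      (∀ k, 2 * (B k).ncard + Nat.card K ^ 2 = (Nat.card K ^ 2) ^ 2) ∧
      ∀ χ : AddChar V ℂ, χ ≠ 0 → ∃ a : Fin 4 → ℤ, ∑ k, |a k| = 1 ∧
        ∀ k, charSum χ (B k) = (Nat.card K ^ 2 : ℕ) * a k := by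
  obtain ⟨𝓙, h𝓙, h𝓙card⟩ := h.exists_subset_right hq
  obtain ⟨𝓘, h𝓘, h𝓘card⟩ := h.symm.exists_subset_right hq
  let 𝓒 : Fin 4 → Set (Submodule K V) := ![𝓙, 𝓘, 𝓙, 𝓘]
  refine ⟨fun k => nonzeroVectors (S k ∪ 𝓒 k), fun k => ?_, fun χ hχ => ?_⟩
  · have h𝓙2 : IsPartialSpread 2 𝓙 := h.isPartialSpread.mono (h𝓙.trans Set.subset_union_right)
    have h𝓘2 : IsPartialSpread 2 𝓘 := h.isPartialSpread.mono (h𝓘.trans Set.subset_union_left)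
    fin_cases k
    · exact (hQ 0).two_mul_ncard_nonzeroVectors_union hq h𝓙2 h𝓙card
        (h.disjoint_nonzeroVectors (h₀₂ ▸ Set.subset_union_left) h𝓙)
    · exact (hQ 1).two_mul_ncard_nonzeroVectors_union hq h𝓘2 h𝓘card
        (h.symm.disjoint_nonzeroVectors (h₁₃ ▸ Set.subset_union_left) h𝓘)
    · exact (hQ 2).two_mul_ncard_nonzeroVectors_union hq h𝓙2 h𝓙card
        (h.disjoint_nonzeroVectors (h₀₂ ▸ Set.subset_union_right) h𝓙)
    · exact (hQ 3).two_mul_ncard_nonzeroVectors_union hq h𝓘2 h𝓘card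
        (h.symm.disjoint_nonzeroVectors (h₁₃ ▸ Set.subset_union_right) h𝓘)
  · obtain ⟨a₀, a₂, ha, h₀, h₂⟩ :=
      h.exists_charSum_eq hq hV (hQ 0) (hQ 2) hdisj₀₂ h₀₂ h𝓙 h𝓙card hχ
    obtain ⟨a₁, a₃, ha', h₁, h₃⟩ :=
      h.symm.exists_charSum_eq hq hV (hQ 1) (hQ 3) hdisj₁₃ h₁₃ h𝓘 h𝓘card hχ
    have hAB := h.kernelCount_add_kernelCount hV hχ
    refine ⟨![a₀, a₁, a₂, a₃], ?_, fun k => ?_⟩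
    · simp only [Fin.sum_univ_four, Matrix.cons_val]
      lia
    · push_cast
      fin_cases k <;> assumption

theorem exists_isMHDS (h : IsSplitSpread 𝓐 𝓑) (hq : Odd (Nat.card K))
    (hV : Module.finrank K V = 4) {S : Fin 4 → Set (Submodule K V)}
    (hQ : ∀ k, IsProjTypeQ (Nat.card K) K V (S k)) (hdisj₀₂ : Disjoint (S 0) (S 2))
    (hdisj₁₃ : Disjoint (S 1) (S 3)) (h₀₂ : S 0 ∪ S 2 = pointsOn 𝓐)
    (h₁₃ : S 1 ∪ S 3 = pointsOn 𝓑) {H : Type} [AddCommGroup H] [Fintype H]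
    (hH : Fintype.card H = 4) : ∃ D : Set (H × V), IsMHDS (Nat.card K ^ 2) D := by
  obtain ⟨B, hBcard, hBchar⟩ := h.exists_blocks hq hV hQ hdisj₀₂ hdisj₁₃ h₀₂ h₁₃
  let ε : H ≃ Fin 4 := Fintype.equivFinOfCardEq hH
  have hVcard : Nat.card V = (Nat.card K ^ 2) ^ 2 := by
    rw [Module.natCard_eq_pow_finrank (K := K), hV, ← pow_mul]
  refine exists_isMHDS_of_charSum hH hVcard (B ∘ ε) (fun k => hBcard (ε k)) fun χ hχ => ?_
  obtain ⟨a, ha, hBa⟩ := hBchar χ hχ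
  exact ⟨a ∘ ε, (Equiv.sum_comp ε fun k => |a k|).trans ha, fun k => hBa (ε k)⟩

end IsSplitSpread

end TypeQPartitions

section IndexedSpreads

variable {K V ι : Type*} [Field K] [AddCommGroup V] [Module K V] {L : ι → Submodule K V}

lemma pointsOn_image (L : ι → Submodule K V) (I : Set ι) :
    pointsOn (L '' I) = {P : Submodule K V | Module.finrank K P = 1 ∧ ∃ i, i ∈ I ∧ P ≤ L i} := by
  simp only [pointsOn, Set.exists_mem_image]

lemma injective_of_finrank_pos (hpos : ∀ i, 0 < Module.finrank K (L i))
    (hdisj : ∀ i j, i ≠ j → L i ⊓ L j = ⊥) : Function.Injective L := fun i j hij => by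
  by_contra hne
  have hbot := hdisj i j hne
  rw [← hij, inf_idem] at hbot
  exact (hpos i).ne' (by rw [hbot, finrank_bot])

lemma isSplitSpread_image [Finite ι] (hdim : ∀ i, Module.finrank K (L i) = 2)
    (hskew : ∀ i j, i ≠ j → L i ⊓ L j = ⊥) (hι : Nat.card ι = Nat.card K ^ 2 + 1) {I : Set ι}
    (hI : 2 * I.ncard = Nat.card K ^ 2 + 1) : IsSplitSpread (L '' I) (L '' Iᶜ) := by
  have hinj : Function.Injective L := injective_of_finrank_pos (fun i => by simp [hdim]) hskew
  have hcompl := Set.ncard_add_ncard_compl I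
  refine ⟨?_, (Set.disjoint_image_iff hinj).2 disjoint_compl_right, ?_, ?_⟩
  · rw [← Set.image_union, Set.union_compl_self, Set.image_univ]
    exact ⟨Set.forall_mem_range.2 hdim, Pairwise.range_pairwise fun i j hne =>
      disjoint_iff.2 (hskew i j hne)⟩
  · rwa [Set.ncard_image_of_injective _ hinj]
  · rw [Set.ncard_image_of_injective _ hinj]
    lia

lemma two_mul_ncard_fin_le_half {n : ℕ} (hn : Odd n) :
    2 * {i : Fin (n + 1) | (i : ℕ) ≤ (n - 1) / 2}.ncard = n + 1 := by
  obtain ⟨k, rfl⟩ := hn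
  have hset : {i : Fin (2 * k + 1 + 1) | (i : ℕ) ≤ (2 * k + 1 - 1) / 2} =
      (Finset.Iic (⟨k, by lia⟩ : Fin (2 * k + 1 + 1)) : Set (Fin (2 * k + 1 + 1))) := by
    ext i
    simp [Fin.le_def]
  rw [hset, Set.ncard_coe_finset, Fin.card_Iic]
  ring

lemma compl_fin_le_half {n : ℕ} (hn : Odd n) :
    {i : Fin (n + 1) | (i : ℕ) ≤ (n - 1) / 2}ᶜ = {i : Fin (n + 1) | (n + 1) / 2 ≤ (i : ℕ)} := by
  obtain ⟨k, rfl⟩ := hn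
  ext i
  simp only [Set.mem_compl_iff, Set.mem_ofPred_eq]
  lia

end IndexedSpreads

section ElementaryAbelian

lemma nonempty_linearEquiv_of_card_eq (K : Type*) {A B : Type*} [Field K] [Finite K]
    [AddCommGroup A] [AddCommGroup B] [Module K A] [Module K B] [Finite A] [Finite B]
    (hcard : Nat.card A = Nat.card B) : Nonempty (A ≃ₗ[K] B) := by
  rw [Module.natCard_eq_pow_finrank (K := K) (V := A),
    Module.natCard_eq_pow_finrank (K := K) (V := B)] at hcard
  exact FiniteDimensional.nonempty_linearEquiv_of_finrank_eq
    (Nat.pow_right_injective Finite.one_lt_card hcard)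

lemma nonempty_addEquiv_of_card_eq {p : ℕ} (hp : p.Prime) {A B : Type*} [AddCommGroup A]
    [AddCommGroup B] [Finite A] [Finite B] (hA : ∀ x : A, p • x = 0) (hB : ∀ x : B, p • x = 0)
    (hcard : Nat.card A = Nat.card B) : Nonempty (A ≃+ B) := by
  have : Fact p.Prime := ⟨hp⟩
  let _ : Module (ZMod p) A := AddCommGroup.zmodModule hA
  let _ : Module (ZMod p) B := AddCommGroup.zmodModule hB
  exact (nonempty_linearEquiv_of_card_eq (ZMod p) hcard).map LinearEquiv.toAddEquiv

lemma nsmul_eq_zero_of_card_eq_pow {K V : Type*} [Field K] [Fintype K] [AddCommGroup V]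
    [Module K V] {p s : ℕ} (hK : Fintype.card K = p ^ s) (x : V) : p • x = 0 := by
  have hp := FiniteField.cast_card_eq_zero K
  rw [hK, Nat.cast_pow] at hp
  rw [← Nat.cast_smul_eq_nsmul K, eq_zero_of_pow_eq_zero hp, zero_smul]

end ElementaryAbelian

/-- The Wilson–Xiang theorem: a spread of `PG(3,q)` together with four pairwise
disjoint projective sets of type Q, half of the spread covering `S₀ ∪ S₂` and the
other half covering `S₁ ∪ S₃`, yields Menon–Hadamard difference sets in `H × G`
for `H = ℤ/4` and `H = ℤ/2 × ℤ/2`, `G` elementary abelian of order `q⁴`. -/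
theorem spread_typeQ_gives_MHDS
    (p s q : ℕ) (hp : p.Prime) (hpodd : p ≠ 2) (hs : 0 < s) (hq : q = p ^ s)
    (K : Type) [Field K] [Fintype K] (hK : Fintype.card K = q)
    (V : Type) [AddCommGroup V] [Module K V] (hV : Module.finrank K V = 4)
    (Lns : Fin (q ^ 2 + 1) → Submodule K V)
    (hdim : ∀ i, Module.finrank K (Lns i) = 2)
    (hskew : ∀ i j, i ≠ j → Lns i ⊓ Lns j = ⊥)
    (S : Fin 4 → Set (Submodule K V))
    (hQ : ∀ k, IsProjTypeQ q K V (S k))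
    (hdisj : ∀ k k', k ≠ k' → Disjoint (S k) (S k'))
    (h02 : S 0 ∪ S 2 = {P : Submodule K V | Module.finrank K P = 1 ∧
      ∃ i : Fin (q ^ 2 + 1), (i : ℕ) ≤ (q ^ 2 - 1) / 2 ∧ P ≤ Lns i})
    (h13 : S 1 ∪ S 3 = {P : Submodule K V | Module.finrank K P = 1 ∧
      ∃ i : Fin (q ^ 2 + 1), (q ^ 2 + 1) / 2 ≤ (i : ℕ) ∧ P ≤ Lns i}) :
    ∀ (G : Type) [AddCommGroup G] [Fintype G], Fintype.card G = q ^ 4 →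
      (∀ x : G, p • x = 0) →
      (∃ D : Set (ZMod 4 × G), IsMHDS (q ^ 2) D) ∧
      (∃ D : Set ((ZMod 2 × ZMod 2) × G), IsMHDS (q ^ 2) D) := by
  intro G _ _ hG hpG
  have hodd : Odd q := hq ▸ (hp.odd_of_ne_two hpodd).pow
  have : Module.Finite K V := Module.finite_of_finrank_pos (hV ▸ four_pos)
  have : Finite V := Module.finite_of_finite K
  have hVcard : Nat.card V = q ^ 4 := by
    rw [Module.natCard_eq_pow_finrank (K := K), hV, Nat.card_eq_fintype_card, hK]
  obtain ⟨e⟩ : Nonempty (V ≃+ G) := nonempty_addEquiv_of_card_eq hp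
    (nsmul_eq_zero_of_card_eq_pow (hK.trans hq)) hpG (by rw [hVcard, Nat.card_eq_fintype_card, hG])
  rw [← Nat.card_eq_fintype_card] at hK
  subst hK
  have hsplit := isSplitSpread_image hdim hskew (Nat.card_fin _)
    (two_mul_ncard_fin_le_half hodd.pow)
  have h₁₃ := h13.trans (pointsOn_image Lns {i | (Nat.card K ^ 2 + 1) / 2 ≤ (i : ℕ)}).symm
  rw [← compl_fin_le_half hodd.pow] at h₁₃
  have hexists {H : Type} [AddCommGroup H] [Fintype H] (hH : Fintype.card H = 4) :
      ∃ D : Set (H × G), IsMHDS (Nat.card K ^ 2) D := by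
    obtain ⟨D, hD⟩ := hsplit.exists_isMHDS hodd hV hQ (hdisj 0 2 (by decide))
      (hdisj 1 3 (by decide)) (h02.trans (pointsOn_image Lns _).symm) h₁₃ hH
    exact ⟨_, hD.image ((AddEquiv.refl H).prodCongr e)⟩
  exact ⟨hexists (by simp), hexists (by simp)⟩

end
end
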